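/- arXiv:math/0401313 — 2 statements merged into one kernel-verified Lean document; each statement's English description precedes it below -/
import Mathlib

section
/- Let (L,w) be a pre-honeycomb, and suppose the set V of points v ∈ ℝ² at which at least three of the six numbers w_i^s(v) (i ∈ {1,2,3}, s ∈ {+,−}) are nonzero is nonempty. Then there exists a unique honeycomb H=(V',E',w') such that (w')_i^s(v) = w_i^s(v) for all points v ∈ ℝ², all i ∈ {1,2,3} and all s ∈ {+,−}; moreover its vertex set V' equals V. -/
open scoped BigOperators

attribute [local instance] Classical.propDecidable

noncomputable section

/-- Points of the plane. -/
abbrev Pt : Type := ℝ × ℝ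

/-- Inner product on the plane. -/
def pdot (a b : Pt) : ℝ := a.1 * b.1 + a.2 * b.2

/-- The three generating vectors ξ₁ = (1,0), ξ₂ = (−1/2, √3/2), ξ₃ = (−1/2, −√3/2). -/
noncomputable def xiv : Fin 3 → Pt
  | 0 => ((1 : ℝ), (0 : ℝ))
  | 1 => (-(1 / 2 : ℝ), Real.sqrt 3 / 2)
  | 2 => (-(1 / 2 : ℝ), -(Real.sqrt 3 / 2))

/-- Dual coordinates d_i(x) = −x·ξ_i. -/
noncomputable def dcoord (i : Fin 3) (x : Pt) : ℝ := -(pdot x (xiv i))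

/-- Direction of the ray Ξ_i^s(·): ξ_i rotated by −90° for s = +(true), by +90° for
s = −(false), so that Ξ_i⁺(v)−v, ℝ₊ξ_i, Ξ_i⁻(v)−v follow anticlockwise. -/
noncomputable def rayDir (i : Fin 3) (s : Bool) : Pt :=
  if s then ((xiv i).2, -(xiv i).1) else (-(xiv i).2, (xiv i).1)

/-- The ray Ξ_i^s(v). -/
def XiRay (i : Fin 3) (s : Bool) (v : Pt) : Set Pt :=
  {x | ∃ t : ℝ, 0 ≤ t ∧ x = v + t • rayDir i s}

/-- A finite line (nondegenerate segment). -/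
def IsSegL (S : Set Pt) : Prop := ∃ a b : Pt, a ≠ b ∧ S = segment ℝ a b

/-- A semiinfinite line (ray) with end a. -/
def IsRayFrom (a : Pt) (S : Set Pt) : Prop :=
  ∃ d : Pt, d ≠ 0 ∧ S = {x | ∃ t : ℝ, 0 ≤ t ∧ x = a + t • d}

/-- A semiinfinite line (ray). -/
def IsRayL (S : Set Pt) : Prop := ∃ a : Pt, IsRayFrom a S

/-- A fully infinite line. -/
def IsFullLineL (S : Set Pt) : Prop := ∃ a d : Pt, d ≠ 0 ∧ S = {x | ∃ t : ℝ, x = a + t • d}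

/-- A line: a segment, a ray or a full line. -/
def IsLineL (S : Set Pt) : Prop := IsSegL S ∨ IsRayL S ∨ IsFullLineL S

/-- `S` is perpendicular to ξ_i, i.e. the dual coordinate d_i is constant on S. -/
def PerpTo (i : Fin 3) (S : Set Pt) : Prop := ∀ x ∈ S, ∀ y ∈ S, pdot (x - y) (xiv i) = 0

/-- w_i^s(v): the total weight of the lines of the system whose intersection with
Ξ_i^s(v) contains v and is a line (not a point). -/
noncomputable def wis (L : Finset (Set Pt)) (w : Set Pt → ℤ) (i : Fin 3) (s : Bool)
    (v : Pt) : ℤ :=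
  ∑ ℓ ∈ L.filter (fun ℓ => v ∈ ℓ ∧ IsLineL (ℓ ∩ XiRay i s v)), w ℓ

/-- A Ξ-system: a finite set of lines, each perpendicular to some ξ_i. -/
def IsXiSystem (L : Finset (Set Pt)) : Prop := ∀ ℓ ∈ L, IsLineL ℓ ∧ ∃ i : Fin 3, PerpTo i ℓ

/-- A pre-honeycomb: a Ξ-system with all w_i^s(v) nonnegative satisfying the
divergency (zero-tension) condition at every point. -/
def IsPreHoneycomb (L : Finset (Set Pt)) (w : Set Pt → ℤ) : Prop :=
  IsXiSystem L ∧ (∀ (v : Pt) (i : Fin 3) (s : Bool), 0 ≤ wis L w i s v) ∧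
  ∀ (v : Pt) (i j : Fin 3),
    wis L w i true v - wis L w i false v = wis L w j true v - wis L w j false v

/-- The divergency div_w(v). -/
noncomputable def divw (L : Finset (Set Pt)) (w : Set Pt → ℤ) (v : Pt) : ℤ :=
  wis L w 0 true v - wis L w 0 false v

/-- An interior (non-end) point of a line. -/
def InteriorPt (S : Set Pt) (x : Pt) : Prop :=
  x ∈ S ∧ ∃ d : Pt, d ≠ 0 ∧ ∃ ε : ℝ, 0 < ε ∧ ∀ t : ℝ, |t| ≤ ε → x + t • d ∈ S

/-- `v` is an end of the line `S` (so `S` is incident to `v` as a graph edge). -/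
def IsEnd (v : Pt) (S : Set Pt) : Prop := v ∈ S ∧ ¬ InteriorPt S v

/-- A honeycomb: a (non-standard) planar graph with a nonempty finite vertex set, whose
edges are positively weighted lines, each vertex incident with at least 3 edges, no
interior point of an edge lying on another edge, the ends of edges being vertices, and
the weighted edge set forming a pre-honeycomb. -/
structure Honeycomb : Type where
  verts : Finset Pt
  edges : Finset (Set Pt)
  w : Set Pt → ℤ
  verts_nonempty : verts.Nonempty
  degree : ∀ v ∈ verts, 3 ≤ (edges.filter fun e => IsEnd v e).card
  no_cross : ∀ e ∈ edges, ∀ e' ∈ edges, e ≠ e' → ∀ x : Pt, InteriorPt e x → x ∉ e'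
  w_pos : ∀ e ∈ edges, 0 < w e
  ends_mem : ∀ e ∈ edges, ∀ x : Pt, IsEnd x e → x ∈ verts
  edge_touch : ∀ e ∈ edges, ∃ v ∈ verts, v ∈ e
  pre : IsPreHoneycomb edges w

/-!
Call a point a vertex if two different directions `xiv i` carry nonzero weight there; by zero
tension this is the same as three nonzero numbers `w_i^s(v)`. At any other point zero tension gives
`w_i⁺ = w_i⁻`, so the weight in direction `i` is locally constant along a line perpendicular to
`xiv i` as long as no vertex is met. The edges of a honeycomb with these numbers are therefore
forced: they are the closures of the maximal vertex-free intervals of nonzero weight.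

Such an edge always reaches a vertex. Otherwise it is a full line; take a vertex at minimal distance
from it. Nonnegativity and zero tension provide a ray of nonzero weight from that vertex towards the
line, its weight persists until the line is hit, and the point of intersection is a vertex.
-/

section Directions

variable (i j : Fin 3) (s : Bool)

theorem xiv_normSq : (xiv i).1 ^ 2 + (xiv i).2 ^ 2 = 1 := by
  have sq_sqrt_three : Real.sqrt 3 ^ 2 = 3 := Real.sq_sqrt (by norm_num)
  fin_cases i <;> simp only [xiv] <;> linarith

theorem rayDir_not : rayDir i (!s) = -rayDir i s := by
  cases s <;> simp [rayDir]

theorem rayDir_ne_zero : rayDir i s ≠ 0 := by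
  intro h
  have := xiv_normSq i
  cases s <;> simp_all [rayDir, Prod.ext_iff]

theorem pdot_rayDir_self : pdot (rayDir i s) (xiv i) = 0 := by
  cases s <;> simp only [rayDir, pdot, Bool.false_eq_true, ↓reduceIte] <;> ring

theorem eq_smul_rayDir_of_pdot_eq_zero {i : Fin 3} {x : Pt} (h : pdot x (xiv i) = 0) (s : Bool) :
    x = pdot x (rayDir i s) • rayDir i s := by
  have hn := xiv_normSq i
  unfold pdot at h
  ext <;> cases s <;>
    simp only [rayDir, pdot, Bool.false_eq_true, ↓reduceIte, Prod.smul_mk, smul_eq_mul]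
  · linear_combination (xiv i).1 * h - x.1 * hn
  · linear_combination (xiv i).1 * h - x.1 * hn
  · linear_combination (xiv i).2 * h - x.2 * hn
  · linear_combination (xiv i).2 * h - x.2 * hn

theorem pdot_rayDir_add_one :
    pdot (rayDir (i + 1) s) (xiv i) = if s then Real.sqrt 3 / 2 else -(Real.sqrt 3 / 2) := by
  fin_cases i <;> cases s <;>
    simp only [pdot, rayDir, xiv, Bool.false_eq_true, ↓reduceIte, Fin.zero_eta, Fin.mk_one,
      Fin.reduceFinMk, Fin.isValue, Fin.reduceAdd, zero_add] <;>
    ring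

theorem pdot_rayDir_add_two_not :
    pdot (rayDir (i + 2) (!s)) (xiv i) = pdot (rayDir (i + 1) s) (xiv i) := by
  fin_cases i <;> cases s <;>
    simp only [pdot, rayDir, xiv, Bool.not_true, Bool.not_false, Bool.false_eq_true, ↓reduceIte,
      Fin.zero_eta, Fin.mk_one, Fin.reduceFinMk, Fin.isValue, Fin.reduceAdd, zero_add] <;>
    ring

variable {i j}

theorem pdot_rayDir_ne_zero (hij : i ≠ j) : pdot (rayDir i s) (xiv j) ≠ 0 := by
  have ne_zero (s : Bool) : pdot (rayDir (j + 1) s) (xiv j) ≠ 0 := by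
    rw [pdot_rayDir_add_one]
    cases s <;> simp
  obtain rfl | rfl : i = j + 1 ∨ i = j + 2 := by omega
  · exact ne_zero s
  · rw [← Bool.not_not s, pdot_rayDir_add_two_not]
    exact ne_zero _

end Directions

section XiLine

/-- The unit-speed parametrisation `t ↦ p + t • rayDir i s` of the full line `Ξ_i(p)`; its
restriction to `t ≥ 0` traces `XiRay i s p`. -/
def xiLine (i : Fin 3) (s : Bool) (p : Pt) (t : ℝ) : Pt := p + t • rayDir i s

variable (i j : Fin 3) (s : Bool) (p : Pt)

@[simp]
theorem xiLine_zero : xiLine i s p 0 = p := by simp [xiLine]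

theorem xiLine_xiLine (a b : ℝ) : xiLine i s (xiLine i s p a) b = xiLine i s p (a + b) := by
  simp only [xiLine]
  module

theorem xiLine_not (t : ℝ) : xiLine i (!s) p t = xiLine i s p (-t) := by
  simp [xiLine, rayDir_not]

theorem continuous_xiLine : Continuous (xiLine i s p) := by
  unfold xiLine
  fun_prop

theorem xiLine_injective : Function.Injective (xiLine i s p) := fun _ _ h =>
  smul_left_injective ℝ (rayDir_ne_zero i s) (add_left_cancel h)

theorem pdot_xiLine_sub (q : Pt) (t : ℝ) :
    pdot (xiLine i s p t - q) (xiv j) = pdot (p - q) (xiv j) + t * pdot (rayDir i s) (xiv j) := by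
  simp only [pdot, xiLine, Prod.fst_sub, Prod.snd_sub, Prod.fst_add, Prod.snd_add, Prod.smul_fst,
    Prod.smul_snd, smul_eq_mul]
  ring

theorem exists_xiLine_eq {i : Fin 3} {p q : Pt} (h : pdot (q - p) (xiv i) = 0) (s : Bool) :
    ∃ t, xiLine i s p t = q :=
  ⟨_, by rw [xiLine, ← eq_smul_rayDir_of_pdot_eq_zero h, add_sub_cancel]⟩

theorem perpTo_image_xiLine (I : Set ℝ) : PerpTo i (xiLine i s p '' I) := by
  rintro _ ⟨a, -, rfl⟩ _ ⟨b, -, rfl⟩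
  rw [← neg_sub, show xiLine i s p b - xiLine i s p a = (b - a) • rayDir i s by
    simp only [xiLine]; module]
  have := pdot_rayDir_self i s
  simp only [pdot, Prod.fst_neg, Prod.snd_neg, Prod.smul_fst, Prod.smul_snd, smul_eq_mul] at this ⊢
  linear_combination (a - b) * this

variable {i j p} {S T : Set Pt}

theorem PerpTo.exists_xiLine_eq (hS : PerpTo i S) {q : Pt} (hp : p ∈ S) (hq : q ∈ S) (s : Bool) :
    ∃ t, xiLine i s p t = q :=
  _root_.exists_xiLine_eq (hS q hq p hp) s

theorem PerpTo.inter_subsingleton (hS : PerpTo i S) (hT : PerpTo j T) (hij : i ≠ j) :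
    (S ∩ T).Subsingleton := by
  rintro x ⟨hxS, hxT⟩ y ⟨hyS, hyT⟩
  obtain ⟨t, rfl⟩ := hS.exists_xiLine_eq hxS hyS true
  have h := hT _ hyT _ hxT
  rw [pdot_xiLine_sub, hT x hxT x hxT, zero_add, mul_eq_zero] at h
  simp [h.resolve_right (pdot_rayDir_ne_zero true hij)]

end XiLine

section Lines

theorem exists_eq_Icc_or_Ici_or_Iic_or_univ {α : Type*} [ConditionallyCompleteLinearOrder α]
    [TopologicalSpace α] [OrderTopology α] {I : Set α} (hcl : IsClosed I) (hoc : I.OrdConnected)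
    (hI : I.Nonempty) :
    (∃ a b, I = Set.Icc a b) ∨ (∃ a, I = Set.Ici a) ∨ (∃ a, I = Set.Iic a) ∨ I = Set.univ := by
  by_cases hb : BddBelow I <;> by_cases ha : BddAbove I
  · exact .inl ⟨sInf I, sSup I, (subset_Icc_csInf_csSup hb ha).antisymm
      (hoc.out (hcl.csInf_mem hI hb) (hcl.csSup_mem hI ha))⟩
  · refine .inr (.inl ⟨sInf I, Set.Subset.antisymm (fun t ht => csInf_le hb ht) fun t ht => ?_⟩)
    obtain ⟨u, hu, htu⟩ := not_bddAbove_iff.1 ha t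
    exact hoc.out (hcl.csInf_mem hI hb) hu ⟨ht, htu.le⟩
  · refine .inr (.inr (.inl ⟨sSup I, Set.Subset.antisymm (fun t ht => le_csSup ha ht)
      fun t ht => ?_⟩))
    obtain ⟨l, hl, hlt⟩ := not_bddBelow_iff.1 hb t
    exact hoc.out hl (hcl.csSup_mem hI ha) ⟨hlt.le, ht⟩
  · refine .inr (.inr (.inr (Set.eq_univ_of_forall fun t => ?_)))
    obtain ⟨l, hl, hlt⟩ := not_bddBelow_iff.1 hb t
    obtain ⟨u, hu, htu⟩ := not_bddAbove_iff.1 ha t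
    exact hoc.out hl hu ⟨hlt.le, htu.le⟩

variable {S : Set Pt}

theorem isLineL_image {p d : Pt} {I : Set ℝ} (hd : d ≠ 0) (hcl : IsClosed I)
    (hoc : I.OrdConnected) (hI : I.Nontrivial) : IsLineL ((fun t : ℝ => p + t • d) '' I) := by
  obtain ⟨a, b, rfl⟩ | ⟨a, rfl⟩ | ⟨a, rfl⟩ | rfl :=
    exists_eq_Icc_or_Ici_or_Iic_or_univ hcl hoc hI.nonempty
  · have hab : a < b := by
      by_contra! hba
      exact Set.not_subsingleton_iff.2 hI (Set.subsingleton_Icc_of_ge hba)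
    refine .inl ⟨p + a • d, p + b • d, fun h =>
      hab.ne (smul_left_injective ℝ hd (add_left_cancel h)), ?_⟩
    have lineMap_eq (t : ℝ) : AffineMap.lineMap (k := ℝ) p (p + d) t = p + t • d := by
      simp [AffineMap.lineMap_apply, add_comm]
    simp only [← segment_eq_Icc hab.le, ← lineMap_eq, image_segment]
  · refine .inr (.inl ⟨p + a • d, d, hd, Set.ext fun y => ⟨?_, ?_⟩⟩)
    · rintro ⟨t, ht, rfl⟩
      exact ⟨t - a, sub_nonneg.2 ht, by module⟩
    · rintro ⟨t, ht, rfl⟩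
      exact ⟨a + t, by simpa using ht, by module⟩
  · refine .inr (.inl ⟨p + a • d, -d, neg_ne_zero.2 hd, Set.ext fun y => ⟨?_, ?_⟩⟩)
    · rintro ⟨t, ht, rfl⟩
      exact ⟨a - t, sub_nonneg.2 ht, by module⟩
    · rintro ⟨t, ht, rfl⟩
      exact ⟨a - t, by simpa using ht, by module⟩
  · refine .inr (.inr ⟨p, d, hd, ?_⟩)
    ext y
    simp [eq_comm]

theorem IsLineL.exists_eq_image (h : IsLineL S) : ∃ (p d : Pt) (I : Set ℝ), d ≠ 0 ∧ IsClosed I ∧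
    I.OrdConnected ∧ I.Nontrivial ∧ S = (fun t : ℝ => p + t • d) '' I := by
  rcases h with ⟨a, b, hab, rfl⟩ | ⟨a, d, hd, rfl⟩ | ⟨a, d, hd, rfl⟩
  · exact ⟨a, b - a, Set.Icc 0 1, sub_ne_zero.2 hab.symm, isClosed_Icc, Set.ordConnected_Icc,
      ⟨0, by simp, 1, by simp, zero_ne_one⟩, segment_eq_image' ℝ a b⟩
  · exact ⟨a, d, Set.Ici 0, hd, isClosed_Ici, Set.ordConnected_Ici,
      ⟨0, by simp, 1, by simp, zero_ne_one⟩, by ext; simp [eq_comm]⟩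
  · exact ⟨a, d, Set.univ, hd, isClosed_univ, Set.ordConnected_univ, Set.nontrivial_univ, by
      ext; simp [eq_comm]⟩

theorem IsLineL.isClosed (h : IsLineL S) : IsClosed S := by
  obtain ⟨p, d, I, hd, hcl, -, -, rfl⟩ := h.exists_eq_image
  exact ((Homeomorph.addLeft p).isClosedEmbedding.comp
    (LinearMap.isClosedEmbedding_of_injective (f := LinearMap.toSpanSingleton ℝ Pt d)
      (LinearMap.ker_toSpanSingleton ℝ hd))).isClosedMap I hcl

theorem IsLineL.convex (h : IsLineL S) : Convex ℝ S := by
  obtain ⟨p, d, I, -, -, hoc, -, rfl⟩ := h.exists_eq_image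
  rw [← Set.image_image (p + ·) (· • d)]
  exact (hoc.convex.is_linear_image (IsLinearMap.isLinearMap_smul' d)).translate p

theorem IsLineL.nontrivial (h : IsLineL S) : S.Nontrivial := by
  obtain ⟨p, d, I, hd, -, -, hI, rfl⟩ := h.exists_eq_image
  exact hI.image fun _ _ hab => smul_left_injective ℝ hd (add_left_cancel hab)

theorem IsLineL.isClosed_preimage_xiLine (h : IsLineL S) (i : Fin 3) (s : Bool) (p : Pt) :
    IsClosed (xiLine i s p ⁻¹' S) :=
  h.isClosed.preimage (continuous_xiLine i s p)

theorem IsLineL.ordConnected_preimage_xiLine (h : IsLineL S) (i : Fin 3) (s : Bool) (p : Pt) :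
    (xiLine i s p ⁻¹' S).OrdConnected :=
  ((h.convex.translate_preimage_right p).is_linear_preimage
    (IsLinearMap.isLinearMap_smul' (rayDir i s))).ordConnected

end Lines

section Germs

open Filter Topology

/-- The line `S` contains `v` together with an initial piece of the ray `XiRay i s v`; these are
the lines counted by `wis _ _ i s v`. -/
def HasGerm (S : Set Pt) (v : Pt) (i : Fin 3) (s : Bool) : Prop :=
  v ∈ S ∧ ∃ t > 0, xiLine i s v t ∈ S

variable {S T : Set Pt} {i j : Fin 3} {s s' : Bool} {v p x : Pt} {t : ℝ}

theorem IsLineL.isLineL_inter_xiRay_iff (h : IsLineL S) :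
    (v ∈ S ∧ IsLineL (S ∩ XiRay i s v)) ↔ HasGerm S v i s := by
  refine and_congr_right fun hv => ⟨fun hl => ?_, ?_⟩
  · obtain ⟨_, ⟨hy, t, ht, rfl⟩, hne⟩ := hl.nontrivial.exists_ne v
    exact ⟨t, ht.lt_of_ne (by rintro rfl; simp at hne), hy⟩
  · rintro ⟨t, ht, hy⟩
    have inter_eq : S ∩ XiRay i s v = xiLine i s v '' (xiLine i s v ⁻¹' S ∩ Set.Ici 0) := by
      rw [Set.inter_comm, Set.image_preimage_inter, Set.inter_comm]
      congr 1
      ext y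
      simp [XiRay, xiLine, eq_comm]
    rw [inter_eq]
    exact isLineL_image (rayDir_ne_zero i s) ((h.isClosed_preimage_xiLine i s v).inter isClosed_Ici)
      ((h.ordConnected_preimage_xiLine i s v).inter Set.ordConnected_Ici)
      ⟨0, by simpa using hv, t, ⟨hy, ht.le⟩, ht.ne⟩

theorem HasGerm.eq_of_perpTo (hg : HasGerm S v i s) (hp : PerpTo j S) : i = j := by
  obtain ⟨hv, t, ht, hy⟩ := hg
  by_contra hij
  have h := hp _ hy _ hv
  rw [pdot_xiLine_sub, hp v hv v hv, zero_add] at h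
  exact mul_ne_zero ht.ne' (pdot_rayDir_ne_zero s hij) h

theorem interiorPt_xiLine_of_mem_interior (ht : t ∈ interior (xiLine i s p ⁻¹' S)) :
    InteriorPt S (xiLine i s p t) := by
  obtain ⟨ε, hε, hball⟩ := Metric.nhds_basis_closedBall.mem_iff.1 (mem_interior_iff_mem_nhds.1 ht)
  refine ⟨hball (Metric.mem_closedBall_self hε.le), rayDir i s, rayDir_ne_zero i s, ε, hε,
    fun u hu => ?_⟩
  change xiLine i s _ u ∈ S
  rw [xiLine_xiLine]
  exact hball (by simpa using hu)

theorem PerpTo.interiorPt_xiLine_iff (hp : PerpTo i S) :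
    InteriorPt S (xiLine i s p t) ↔ t ∈ interior (xiLine i s p ⁻¹' S) := by
  refine ⟨?_, interiorPt_xiLine_of_mem_interior⟩
  rintro ⟨hx, d, hd, ε, hε, h⟩
  obtain ⟨c, hc⟩ := hp.exists_xiLine_eq hx (h ε (abs_of_pos hε).le) s
  have smul_eq : ε • d = c • rayDir i s := (add_left_cancel hc).symm
  have c_ne_zero : c ≠ 0 := by
    rintro rfl
    simp [hε.ne', hd] at smul_eq
  refine mem_interior_iff_mem_nhds.2 <|
    Filter.mem_of_superset (Metric.closedBall_mem_nhds t (abs_pos.2 c_ne_zero)) fun u hu => ?_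
  rw [Metric.mem_closedBall, Real.dist_eq] at hu
  have eq_add : xiLine i s p u = xiLine i s p t + ((u - t) / c * ε) • d := by
    rw [mul_smul, smul_eq, smul_smul, div_mul_cancel₀ _ c_ne_zero]
    simp only [xiLine]
    module
  rw [Set.mem_preimage, eq_add]
  refine h _ ?_
  rw [abs_mul, abs_div, abs_of_pos hε]
  exact mul_le_of_le_one_left hε.le (div_le_one_of_le₀ hu (abs_nonneg c))

theorem HasGerm.eventually_mem_interior (hg : HasGerm S v i s) (hl : IsLineL S) :
    ∀ᶠ t in 𝓝[>] 0, t ∈ interior (xiLine i s v ⁻¹' S) := by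
  obtain ⟨hv, t, ht, hy⟩ := hg
  filter_upwards [Ioo_mem_nhdsGT ht] with u hu
  exact interior_maximal (Set.Ioo_subset_Icc_self.trans
    ((hl.ordConnected_preimage_xiLine i s v).out (by simpa using hv) hy)) isOpen_Ioo hu

theorem HasGerm.exists_interiorPt_common (hS : HasGerm S v i s) (hT : HasGerm T v i s)
    (hlS : IsLineL S) (hlT : IsLineL T) : ∃ x, InteriorPt S x ∧ InteriorPt T x := by
  obtain ⟨t, htS, htT⟩ :=
    ((hS.eventually_mem_interior hlS).and (hT.eventually_mem_interior hlT)).exists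
  exact ⟨_, interiorPt_xiLine_of_mem_interior htS, interiorPt_xiLine_of_mem_interior htT⟩

theorem IsLineL.exists_hasGerm (hl : IsLineL S) (hp : PerpTo i S) (hx : x ∈ S) :
    ∃ s, HasGerm S x i s := by
  obtain ⟨y, hy, hne⟩ := hl.nontrivial.exists_ne x
  obtain ⟨t, rfl⟩ := hp.exists_xiLine_eq hx hy true
  rcases lt_trichotomy t 0 with ht | rfl | ht
  · exact ⟨false, hx, -t, neg_pos.2 ht, by rwa [← Bool.not_true, xiLine_not, neg_neg]⟩
  · simp at hne
  · exact ⟨true, hx, t, ht, hy⟩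

theorem IsLineL.exists_interiorPt (hl : IsLineL S) (hp : PerpTo i S) : ∃ x, InteriorPt S x := by
  obtain ⟨x, hx⟩ := hl.nontrivial.nonempty
  obtain ⟨s, hs⟩ := hl.exists_hasGerm hp hx
  obtain ⟨y, hy, -⟩ := hs.exists_interiorPt_common hs hl hl
  exact ⟨y, hy⟩

theorem IsLineL.perpTo_unique (hl : IsLineL S) (hi : PerpTo i S) (hj : PerpTo j S) : i = j := by
  obtain ⟨x, hx⟩ := hl.nontrivial.nonempty
  obtain ⟨s, hs⟩ := hl.exists_hasGerm hi hx
  exact hs.eq_of_perpTo hj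

theorem IsLineL.interiorPt_iff_forall_hasGerm (hl : IsLineL S) (hp : PerpTo i S) :
    InteriorPt S x ↔ ∀ s, HasGerm S x i s := by
  constructor
  · intro h s
    refine ⟨h.1, ?_⟩
    rw [← xiLine_zero i s x, hp.interiorPt_xiLine_iff] at h
    obtain ⟨ε, hε, hball⟩ := Metric.nhds_basis_closedBall.mem_iff.1 (mem_interior_iff_mem_nhds.1 h)
    exact ⟨ε, hε, hball (by simp [abs_of_pos hε])⟩
  · intro h
    obtain ⟨-, a, ha, hxa⟩ := h true
    obtain ⟨-, b, hb, hxb⟩ := h false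
    rw [← Bool.not_true, xiLine_not] at hxb
    rw [← xiLine_zero i true x]
    exact interiorPt_xiLine_of_mem_interior <| interior_maximal (Set.Ioo_subset_Icc_self.trans
      ((hl.ordConnected_preimage_xiLine i true x).out hxb hxa)) isOpen_Ioo ⟨neg_lt_zero.2 hb, ha⟩

theorem HasGerm.eq_of_isEnd (hS : HasGerm S v i s) (hS' : HasGerm S v i s') (hl : IsLineL S)
    (hp : PerpTo i S) (hv : IsEnd v S) : s = s' := by
  by_contra hne
  refine hv.2 ((hl.interiorPt_iff_forall_hasGerm hp).2 fun s'' => ?_)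
  obtain rfl | rfl : s'' = s ∨ s'' = s' := by
    cases s <;> cases s' <;> cases s'' <;> simp_all
  exacts [hS, hS']

theorem IsLineL.eventually_hasGerm_iff (hl : IsLineL S) (hp : PerpTo j S) (i : Fin 3) (s : Bool)
    (x : Pt) : ∀ᶠ t in 𝓝[>] 0, ∀ s', HasGerm S (xiLine i s x t) i s' ↔ HasGerm S x i s := by
  by_cases hg : HasGerm S x i s
  · obtain rfl := hg.eq_of_perpTo hp
    filter_upwards [hg.eventually_mem_interior hl] with t ht s'
    exact iff_of_true ((hl.interiorPt_iff_forall_hasGerm hp).1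
      (interiorPt_xiLine_of_mem_interior ht) s') hg
  · have eventually_notMem : ∀ᶠ t in 𝓝[>] 0, xiLine i s x t ∉ S := by
      by_cases hx : x ∈ S
      · filter_upwards [self_mem_nhdsWithin] with t ht hmem
        exact hg ⟨hx, t, ht, hmem⟩
      · exact nhdsWithin_le_nhds ((hl.isClosed_preimage_xiLine i s x).isOpen_compl.mem_nhds
          (by simpa using hx))
    filter_upwards [eventually_notMem] with t ht s'
    exact iff_of_false (fun h => ht h.1) hg

end Germs

section Weights

open Filter Topology

variable {L : Finset (Set Pt)} {w : Set Pt → ℤ} {i : Fin 3} {s : Bool} {x : Pt}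

theorem IsXiSystem.wis_eq_sum_hasGerm (hL : IsXiSystem L) (w : Set Pt → ℤ) (i : Fin 3) (s : Bool)
    (x : Pt) : wis L w i s x = ∑ ℓ ∈ L with HasGerm ℓ x i s, w ℓ :=
  Finset.sum_congr (Finset.filter_congr fun _ hℓ => (hL _ hℓ).1.isLineL_inter_xiRay_iff)
    fun _ _ => rfl

theorem IsXiSystem.exists_hasGerm_of_wis_ne_zero (hL : IsXiSystem L) (h : wis L w i s x ≠ 0) :
    ∃ ℓ ∈ L, HasGerm ℓ x i s := by
  rw [hL.wis_eq_sum_hasGerm] at h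
  obtain ⟨ℓ, hℓ, -⟩ := Finset.exists_ne_zero_of_sum_ne_zero h
  exact ⟨ℓ, Finset.mem_filter.1 hℓ⟩

theorem IsXiSystem.eventually_wis_eq (hL : IsXiSystem L) (w : Set Pt → ℤ) (i : Fin 3) (s : Bool)
    (x : Pt) : ∀ᶠ t in 𝓝[>] 0, ∀ s', wis L w i s' (xiLine i s x t) = wis L w i s x := by
  have hev := L.eventually_all.2 fun ℓ hℓ =>
    (hL ℓ hℓ).1.eventually_hasGerm_iff (hL ℓ hℓ).2.choose_spec i s x
  filter_upwards [hev] with t ht s'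
  simp only [hL.wis_eq_sum_hasGerm]
  exact Finset.sum_congr (Finset.filter_congr fun ℓ hℓ => ht ℓ hℓ s') fun _ _ => rfl

end Weights

section ZeroTension

/-- The balance condition imposed on the six numbers `w_i^s(v)` at a point `v` of a
pre-honeycomb. -/
def ZeroTension (a : Fin 3 → Bool → ℤ) : Prop :=
  ∀ i j, a i true - a i false = a j true - a j false

/-- Two different directions carry nonzero numbers. For numbers of zero tension this
means that at least three of the six are nonzero, see `ZeroTension.three_le_card_support_iff`. -/
def IsBranching (a : Fin 3 → Bool → ℤ) : Prop :=
  ∃ i j s s', i ≠ j ∧ a i s ≠ 0 ∧ a j s' ≠ 0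

variable {a : Fin 3 → Bool → ℤ}

theorem ZeroTension.exists_ne_zero (ha : ZeroTension a) {i : Fin 3} (hi : a i true ≠ a i false)
    (j : Fin 3) : ∃ s, a j s ≠ 0 := by
  by_contra! h
  have := ha i j
  rw [h true, h false] at this
  omega

theorem ZeroTension.eq_of_not_isBranching (ha : ZeroTension a) (h : ¬IsBranching a) (i : Fin 3)
    (s s' : Bool) : a i s = a i s' := by
  have eq (i : Fin 3) : a i true = a i false := by
    by_contra hi
    obtain ⟨t, ht⟩ := ha.exists_ne_zero hi 0
    obtain ⟨u, hu⟩ := ha.exists_ne_zero hi 1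
    exact h ⟨0, 1, t, u, zero_ne_one, ht, hu⟩
  cases s <;> cases s' <;> simp [eq]

theorem ZeroTension.three_le_card_support_iff (ha : ZeroTension a) :
    3 ≤ ((Finset.univ : Finset (Fin 3 × Bool)).filter fun q => a q.1 q.2 ≠ 0).card ↔
      IsBranching a := by
  by_cases hdiv : ∃ i, a i true ≠ a i false
  · obtain ⟨i, hi⟩ := hdiv
    choose σ hσ using ha.exists_ne_zero hi
    refine iff_of_true ?_ ⟨0, 1, σ 0, σ 1, zero_ne_one, hσ 0, hσ 1⟩
    simpa using Finset.card_le_card_of_injOn (s := Finset.univ) (fun j => (j, σ j))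
      (by simpa [Set.MapsTo] using hσ) (fun j _ k _ h => (Prod.ext_iff.1 h).1)
  · push Not at hdiv
    have eq_apply_true (i s) : a i s = a i true := by cases s <;> simp [hdiv]
    have support_eq : ((Finset.univ : Finset (Fin 3 × Bool)).filter fun q => a q.1 q.2 ≠ 0) =
        (Finset.univ.filter fun i => a i true ≠ 0) ×ˢ Finset.univ := by
      ext ⟨i, s⟩
      simp [eq_apply_true i s]
    rw [support_eq, Finset.card_product, Finset.card_univ, Fintype.card_bool,
      show ∀ n, 3 ≤ n * 2 ↔ 1 < n by omega, Finset.one_lt_card]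
    simp only [Finset.mem_filter, Finset.mem_univ, true_and, IsBranching, eq_apply_true,
      exists_const]
    exact ⟨fun ⟨i, hi, j, hj, hij⟩ => ⟨i, j, hij, hi, hj⟩,
      fun ⟨i, j, hij, hi, hj⟩ => ⟨i, hi, j, hj, hij⟩⟩

theorem IsBranching.ne_zero_or_ne_zero (h : IsBranching a) (ha : ZeroTension a)
    (h0 : ∀ i s, 0 ≤ a i s) (i : Fin 3) (s : Bool) : a (i + 1) s ≠ 0 ∨ a (i + 2) (!s) ≠ 0 := by
  by_contra! hz
  have h12 := ha (i + 1) (i + 2)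
  have h1 := h0 (i + 1) (!s)
  have h2 := h0 (i + 2) s
  have other_eq_zero : a (i + 1) (!s) = 0 ∧ a (i + 2) s = 0 := by
    cases s <;> simp only [Bool.not_true, Bool.not_false] at * <;> omega
  have eq_zero (j : Fin 3) (hj : j ≠ i) (t : Bool) : a j t = 0 := by
    obtain rfl | rfl : t = s ∨ t = !s := by cases s <;> cases t <;> simp
    all_goals
      obtain rfl | rfl : j = i + 1 ∨ j = i + 2 := by omega
      all_goals tauto
  obtain ⟨j, k, t, u, hjk, hj, hk⟩ := h
  by_cases hji : j = i
  · exact hk (eq_zero k (hji ▸ hjk.symm) u)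
  · exact hj (eq_zero j hji t)

end ZeroTension

section Vertices

/-- The points at which two directions carry nonzero numbers `w_i^s(v)`: the vertices of the
honeycomb to be constructed from the family `W i s v = w_i^s(v)`. -/
def vertexSet (W : Fin 3 → Bool → Pt → ℤ) : Set Pt :=
  {v | IsBranching fun i s => W i s v}

variable {L : Finset (Set Pt)} {w : Set Pt → ℤ} {v : Pt}

theorem IsPreHoneycomb.zeroTension (h : IsPreHoneycomb L w) (v : Pt) :
    ZeroTension fun i s => wis L w i s v := h.2.2 v

theorem IsXiSystem.finite_vertexSet (hL : IsXiSystem L) (w : Set Pt → ℤ) :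
    (vertexSet (wis L w)).Finite := by
  refine (((L ×ˢ L).filter fun q => (q.1 ∩ q.2).Subsingleton).finite_toSet.biUnion
    fun q hq => (Finset.mem_filter.1 hq).2.finite).subset ?_
  rintro v ⟨i, j, s, s', hij, hi, hj⟩
  obtain ⟨ℓ, hℓ, hgℓ⟩ := hL.exists_hasGerm_of_wis_ne_zero hi
  obtain ⟨m, hm, hgm⟩ := hL.exists_hasGerm_of_wis_ne_zero hj
  obtain ⟨i', hi'⟩ := (hL ℓ hℓ).2
  obtain ⟨j', hj'⟩ := (hL m hm).2
  obtain rfl := hgℓ.eq_of_perpTo hi'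
  obtain rfl := hgm.eq_of_perpTo hj'
  refine Set.mem_biUnion (x := (ℓ, m)) ?_ ⟨hgℓ.1, hgm.1⟩
  simpa using ⟨⟨hℓ, hm⟩, hi'.inter_subsingleton hj' hij⟩

end Vertices

section Constancy

open Filter Topology

variable {L : Finset (Set Pt)} {w : Set Pt → ℤ} {i : Fin 3} {s : Bool} {x p : Pt}

theorem IsPreHoneycomb.eventually_wis_eq_of_notMem (h : IsPreHoneycomb L w)
    (hx : x ∉ vertexSet (wis L w)) (i : Fin 3) (s : Bool) :
    ∀ᶠ t in 𝓝 0, ∀ s', wis L w i s' (xiLine i s x t) = wis L w i s' x := by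
  have side (σ : Bool) :
      ∀ᶠ t in 𝓝[>] 0, ∀ s', wis L w i s' (xiLine i σ x t) = wis L w i s' x := by
    filter_upwards [h.1.eventually_wis_eq w i σ x] with t ht s'
    rw [ht, (h.zeroTension x).eq_of_not_isBranching hx i σ s']
  have left : ∀ᶠ t in 𝓝[<] 0, ∀ s', wis L w i s' (xiLine i s x t) = wis L w i s' x := by
    have tendsto_neg : Tendsto Neg.neg (𝓝[<] (0 : ℝ)) (𝓝[>] 0) := by
      simpa using tendsto_neg_nhdsLT (a := (0 : ℝ))
    filter_upwards [tendsto_neg.eventually (side !s)] with t ht s'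
    rw [← ht s', xiLine_not, neg_neg]
  rw [← nhdsNE_sup_pure, ← nhdsLT_sup_nhdsGT]
  exact eventually_sup.2 ⟨eventually_sup.2 ⟨left, side s⟩, by simp⟩

theorem IsPreHoneycomb.wis_xiLine_eq_of_isPreconnected (h : IsPreHoneycomb L w) {U : Set ℝ}
    (hU : IsPreconnected U) (hUV : ∀ t ∈ U, xiLine i s p t ∉ vertexSet (wis L w)) {a b : ℝ}
    (ha : a ∈ U) (hb : b ∈ U) (s' : Bool) :
    wis L w i s' (xiLine i s p a) = wis L w i s' (xiLine i s p b) := by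
  refine hU.constant (f := fun t => wis L w i s' (xiLine i s p t)) (fun t ht => ?_) ha hb
  have tendsto_sub : Tendsto (· - t) (𝓝 t) (𝓝 0) := by
    simpa using (continuous_sub_right t).tendsto t
  refine (tendsto_const_nhds.congr' ?_).mono_left nhdsWithin_le_nhds
  filter_upwards [tendsto_sub.eventually (h.eventually_wis_eq_of_notMem (hUV t ht) i s)] with u hu
  rw [← hu s', xiLine_xiLine, add_sub_cancel]

theorem IsPreHoneycomb.wis_xiLine_eq (h : IsPreHoneycomb L w) {T : ℝ} (hT : 0 < T)
    (hV : ∀ t ∈ Set.Ioo 0 T, xiLine i s x t ∉ vertexSet (wis L w)) :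
    wis L w i (!s) (xiLine i s x T) = wis L w i s x := by
  obtain ⟨a, ha, haT⟩ :=
    ((h.1.eventually_wis_eq w i s x).and (Ioo_mem_nhdsGT hT)).exists
  obtain ⟨b, hb, hbT⟩ :=
    ((h.1.eventually_wis_eq w i (!s) (xiLine i s x T)).and (Ioo_mem_nhdsGT hT)).exists
  rw [← hb s, xiLine_not, xiLine_xiLine, ← ha s]
  exact h.wis_xiLine_eq_of_isPreconnected isPreconnected_Ioo hV
    ⟨by linarith [hbT.2], by linarith [hbT.1]⟩ haT s

end Constancy

section EdgeUniqueness

/-- An edge in direction `i` of the honeycomb to be constructed from the family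
`W i s v = w_i^s(v)`: a line perpendicular to `xiv i` and carrying nonzero weight, cut off exactly
where it meets `vertexSet W`. -/
structure IsEdgeFor (W : Fin 3 → Bool → Pt → ℤ) (i : Fin 3) (S : Set Pt) : Prop where
  isLineL : IsLineL S
  perpTo : PerpTo i S
  notMem_vertexSet : ∀ x, InteriorPt S x → x ∉ vertexSet W
  ne_zero : ∀ x, InteriorPt S x → W i true x ≠ 0
  mem_vertexSet : ∀ x, IsEnd x S → x ∈ vertexSet W

namespace IsEdgeFor

variable {W : Fin 3 → Bool → Pt → ℤ} {i j : Fin 3} {s : Bool} {S T : Set Pt} {x : Pt}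

theorem interiorPt_of_notMem (h : IsEdgeFor W i S) (hx : x ∈ S) (hxV : x ∉ vertexSet W) :
    InteriorPt S x := by
  by_contra h_int
  exact hxV (h.mem_vertexSet x ⟨hx, h_int⟩)

theorem subset_of_interiorPt (hS : IsEdgeFor W i S) (hT : IsEdgeFor W i T) (hxS : InteriorPt S x)
    (hxT : InteriorPt T x) : S ⊆ T := by
  set A := xiLine i true x ⁻¹' S
  set B := xiLine i true x ⁻¹' T
  have convex_A : Convex ℝ A := (hS.isLineL.ordConnected_preimage_xiLine i true x).convex
  have isClosed_B : IsClosed B := hT.isLineL.isClosed_preimage_xiLine i true x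
  have zero_mem_A : 0 ∈ interior A := hS.perpTo.interiorPt_xiLine_iff.1 (by simpa using hxS)
  have zero_mem_B : 0 ∈ interior B := hT.perpTo.interiorPt_xiLine_iff.1 (by simpa using hxT)
  have interior_subset_B : interior A ⊆ B := by
    refine (convex_A.interior.isPreconnected.subset_of_closure_inter_subset isOpen_interior
      ⟨0, zero_mem_A, zero_mem_B⟩ ?_).trans interior_subset
    rintro t ⟨htB, htA⟩
    exact hT.perpTo.interiorPt_xiLine_iff.1 <| hT.interiorPt_of_notMem
      (closure_minimal interior_subset isClosed_B htB)
      (hS.notMem_vertexSet _ (interiorPt_xiLine_of_mem_interior htA))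
  intro y hy
  obtain ⟨t, rfl⟩ := hS.perpTo.exists_xiLine_eq hxS.1 hy true
  have ht : t ∈ closure (interior A) := by
    rw [convex_A.closure_interior_eq_closure_of_nonempty_interior ⟨0, zero_mem_A⟩]
    exact subset_closure hy
  exact closure_minimal interior_subset_B isClosed_B ht

theorem eq_of_interiorPt_of_mem (hS : IsEdgeFor W i S) (hT : IsEdgeFor W j T)
    (hxS : InteriorPt S x) (hxT : x ∈ T) : S = T := by
  have hxV := hS.notMem_vertexSet x hxS
  replace hxT := hT.interiorPt_of_notMem hxT hxV
  obtain rfl : i = j := by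
    by_contra hij
    exact hxV ⟨i, j, true, true, hij, hS.ne_zero x hxS, hT.ne_zero x hxT⟩
  exact (hS.subset_of_interiorPt hT hxS hxT).antisymm (hT.subset_of_interiorPt hS hxT hxS)

theorem eq_of_hasGerm (hS : IsEdgeFor W i S) (hT : IsEdgeFor W j T) (hxS : HasGerm S x i s)
    (hxT : HasGerm T x i s) : S = T := by
  obtain ⟨y, hyS, hyT⟩ := hxS.exists_interiorPt_common hxT hS.isLineL hT.isLineL
  exact hS.eq_of_interiorPt_of_mem hT hyS hyT.1

end IsEdgeFor

end EdgeUniqueness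

section EdgeExistence

open Filter Topology

theorem frontier_connectedComponentIn_compl_subset {α : Type*} [TopologicalSpace α]
    [LocallyConnectedSpace α] {τ : Set α} (hτ : IsClosed τ) (x : α) :
    frontier (connectedComponentIn τᶜ x) ⊆ τ := by
  rw [(hτ.isOpen_compl.connectedComponentIn).frontier_eq]
  rintro t ⟨htc, ht⟩
  by_contra htτ
  obtain ⟨c, hc⟩ := closure_nonempty_iff.1 ⟨t, htc⟩
  have insert_subset : insert t (connectedComponentIn τᶜ x) ⊆ τᶜ :=
    Set.insert_subset htτ (connectedComponentIn_subset _ _)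
  have preconnected_insert : IsPreconnected (insert t (connectedComponentIn τᶜ x)) :=
    isPreconnected_connectedComponentIn.subset_closure (Set.subset_insert _ _)
      (Set.insert_subset htc subset_closure)
  rw [connectedComponentIn_eq hc] at ht
  exact ht <| preconnected_insert.subset_connectedComponentIn (Set.mem_insert_of_mem t hc)
    insert_subset (Set.mem_insert _ _)

theorem exists_isPreconnected_mem_nhdsGT {τ : Set ℝ} (hτ : τ.Finite) (a : ℝ) :
    ∃ U, IsOpen U ∧ IsPreconnected U ∧ U ⊆ τᶜ ∧ frontier U ⊆ τ ∧ U ∈ 𝓝[>] a := by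
  have compl_mem : τᶜ ∈ 𝓝[>] a :=
    nhdsGT_le_nhdsNE a (nhdsNE_le_cofinite a hτ.compl_mem_cofinite)
  obtain ⟨b, hab, hb⟩ := mem_nhdsGT_iff_exists_Ioo_subset.1 compl_mem
  obtain ⟨c, hc⟩ := Set.nonempty_Ioo.2 (Set.mem_Ioi.1 hab)
  exact ⟨connectedComponentIn τᶜ c, hτ.isClosed.isOpen_compl.connectedComponentIn,
    isPreconnected_connectedComponentIn, connectedComponentIn_subset _ _,
    frontier_connectedComponentIn_compl_subset hτ.isClosed c,
    mem_of_superset (Ioo_mem_nhdsGT hab)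
      (isPreconnected_Ioo.subset_connectedComponentIn hc hb)⟩

variable {L : Finset (Set Pt)} {w : Set Pt → ℤ} {i : Fin 3} {s : Bool} {x y : Pt} {S : Set Pt}

theorem isEdgeFor_image_closure {W : Fin 3 → Bool → Pt → ℤ} {p : Pt} {U : Set ℝ}
    (hUo : IsOpen U) (hUp : IsPreconnected U) (hne : U.Nonempty)
    (hV : U ⊆ (xiLine i s p ⁻¹' vertexSet W)ᶜ) (hfr : frontier U ⊆ xiLine i s p ⁻¹' vertexSet W)
    (hW : ∀ t ∈ U, W i true (xiLine i s p t) ≠ 0) :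
    IsEdgeFor W i (xiLine i s p '' closure U) := by
  have nontrivial_U : U.Nontrivial := by
    obtain ⟨t, ht⟩ := hne
    exact infinite_of_mem_nhds t (hUo.mem_nhds ht) |>.nontrivial
  have interior_closure_eq : interior (closure U) = U := by
    rw [(Real.convex_iff_isPreconnected.2 hUp).interior_closure_eq_interior_of_nonempty_interior
      (hUo.interior_eq.symm ▸ hne), hUo.interior_eq]
  have interiorPt_iff (t : ℝ) :
      InteriorPt (xiLine i s p '' closure U) (xiLine i s p t) ↔ t ∈ U := by
    rw [(perpTo_image_xiLine i s p _).interiorPt_xiLine_iff,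
      (xiLine_injective i s p).preimage_image, interior_closure_eq]
  refine ⟨isLineL_image (rayDir_ne_zero i s) isClosed_closure hUp.closure.ordConnected
    (nontrivial_U.mono subset_closure), perpTo_image_xiLine i s p _, ?_, ?_, ?_⟩
  · rintro _ h
    obtain ⟨t, -, rfl⟩ := h.1
    exact hV ((interiorPt_iff t).1 h)
  · rintro _ h
    obtain ⟨t, -, rfl⟩ := h.1
    exact hW t ((interiorPt_iff t).1 h)
  · rintro _ ⟨⟨t, ht, rfl⟩, h_int⟩
    exact hfr (hUo.frontier_eq ▸ ⟨ht, fun h => h_int ((interiorPt_iff t).2 h)⟩)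

theorem IsPreHoneycomb.exists_isEdgeFor (h : IsPreHoneycomb L w) (hx : wis L w i s x ≠ 0) :
    ∃ S, IsEdgeFor (wis L w) i S ∧ HasGerm S x i s := by
  have finite_slice : (xiLine i s x ⁻¹' vertexSet (wis L w)).Finite :=
    (h.1.finite_vertexSet w).preimage (xiLine_injective i s x).injOn
  obtain ⟨U, hUo, hUp, hUV, hfr, hU⟩ := exists_isPreconnected_mem_nhdsGT finite_slice 0
  obtain ⟨a, ⟨ha, haU⟩, ha0⟩ :=
    ((h.1.eventually_wis_eq w i s x).and hU).and self_mem_nhdsWithin |>.exists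
  have zero_mem : 0 ∈ closure U := mem_closure_iff_frequently.2 <|
    (show ∀ᶠ t in 𝓝[>] 0, t ∈ U from hU).frequently.filter_mono nhdsWithin_le_nhds
  refine ⟨_, isEdgeFor_image_closure hUo hUp ⟨a, haU⟩ hUV hfr fun t ht => ?_,
    ⟨0, zero_mem, xiLine_zero i s x⟩, a, ha0, Set.mem_image_of_mem _ (subset_closure haU)⟩
  rwa [h.wis_xiLine_eq_of_isPreconnected hUp hUV ht haU, ha]

theorem IsEdgeFor.wis_eq_of_hasGerm (hS : IsEdgeFor (wis L w) i S) (h : IsPreHoneycomb L w)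
    (hx : HasGerm S x i s) (hy : InteriorPt S y) : wis L w i s x = wis L w i true y := by
  obtain ⟨t, ht, htS⟩ :=
    ((h.1.eventually_wis_eq w i s x).and (hx.eventually_mem_interior hS.isLineL)).exists
  obtain ⟨u, rfl⟩ := hS.perpTo.exists_xiLine_eq hx.1 hy.1 s
  rw [← ht true]
  exact h.wis_xiLine_eq_of_isPreconnected
    (hS.isLineL.ordConnected_preimage_xiLine i s x).convex.interior.isPreconnected
    (fun a ha => hS.notMem_vertexSet _ (interiorPt_xiLine_of_mem_interior ha)) htS
    (hS.perpTo.interiorPt_xiLine_iff.1 hy) true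

end EdgeExistence

section Incidence

variable {L : Finset (Set Pt)} {w : Set Pt → ℤ} {W : Fin 3 → Bool → Pt → ℤ} {i : Fin 3}
  {S : Set Pt} {p q v : Pt}

theorem IsEdgeFor.mem_of_disjoint_vertexSet (hS : IsEdgeFor W i S) (hV : Disjoint S (vertexSet W))
    (hp : p ∈ S) (hq : pdot (q - p) (xiv i) = 0) : q ∈ S := by
  obtain ⟨t, rfl⟩ := exists_xiLine_eq hq true
  have isOpen_slice : IsOpen (xiLine i true p ⁻¹' S) :=
    subset_interior_iff_isOpen.1 fun u hu => hS.perpTo.interiorPt_xiLine_iff.1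
      (hS.interiorPt_of_notMem hu (Set.disjoint_left.1 hV hu))
  have slice_eq_univ := IsClopen.eq_univ
    ⟨hS.isLineL.isClosed_preimage_xiLine i true p, isOpen_slice⟩ ⟨0, by simpa using hp⟩
  exact Set.eq_univ_iff_forall.1 slice_eq_univ t

theorem IsPreHoneycomb.exists_wis_ne_zero_and_mul_pdot_neg (h : IsPreHoneycomb L w)
    (hv : v ∈ vertexSet (wis L w)) (i : Fin 3) {σ : ℝ} (hσ : σ ≠ 0) :
    ∃ j s, j ≠ i ∧ wis L w j s v ≠ 0 ∧ σ * pdot (rayDir j s) (xiv i) < 0 := by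
  obtain ⟨s, hs⟩ : ∃ s, σ * pdot (rayDir (i + 1) s) (xiv i) < 0 := by
    simp only [pdot_rayDir_add_one]
    rcases hσ.lt_or_gt with hσ | hσ
    · exact ⟨true, mul_neg_of_neg_of_pos hσ (by simp)⟩
    · exact ⟨false, mul_neg_of_pos_of_neg hσ (by simp)⟩
  rcases hv.ne_zero_or_ne_zero (h.zeroTension v) (fun i s => h.2.1 v i s) i s with hw | hw
  · exact ⟨i + 1, s, by omega, hw, hs⟩
  · exact ⟨i + 2, !s, by omega, hw, by rwa [pdot_rayDir_add_two_not]⟩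

theorem IsPreHoneycomb.exists_pdot_eq_zero_and_wis_ne_zero (h : IsPreHoneycomb L w)
    (hv : v ∈ vertexSet (wis L w)) (hne : pdot (v - p) (xiv i) ≠ 0)
    (hmin : ∀ u ∈ vertexSet (wis L w), |pdot (v - p) (xiv i)| ≤ |pdot (u - p) (xiv i)|) :
    ∃ q, pdot (q - p) (xiv i) = 0 ∧ ∃ j s, j ≠ i ∧ wis L w j s q ≠ 0 := by
  -- Leave `v` along a ray of nonzero weight that approaches the line: by the choice of `v`, its
  -- weight cannot change before the line is reached.
  obtain ⟨j, s, hji, hw, hneg⟩ := h.exists_wis_ne_zero_and_mul_pdot_neg hv i hne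
  set σ := pdot (v - p) (xiv i)
  set m := pdot (rayDir j s) (xiv i)
  have hm : m ≠ 0 := right_ne_zero_of_mul hneg.ne
  have hT : 0 < -(σ / m) := neg_pos.2 (div_neg_iff.2 (mul_neg_iff.1 hneg))
  refine ⟨xiLine j s v (-(σ / m)), ?_, j, !s, hji, ?_⟩
  · rw [pdot_xiLine_sub, neg_mul, div_mul_cancel₀ _ hm, add_neg_cancel]
  · rw [h.wis_xiLine_eq hT fun t ht hV => (hmin _ hV).not_gt ?_]
    · exact hw
    · have height_eq : pdot (xiLine j s v t - p) (xiv i) = σ * (1 - t / -(σ / m)) := by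
        rw [pdot_xiLine_sub]
        field_simp
        ring
      have lt_one : t / -(σ / m) < 1 := (div_lt_one hT).2 ht.2
      have pos : 0 < t / -(σ / m) := div_pos ht.1 hT
      rw [height_eq, abs_mul]
      exact mul_lt_of_lt_one_right (abs_pos.2 hne) (abs_lt.2 ⟨by linarith, by linarith⟩)

theorem IsPreHoneycomb.inter_vertexSet_nonempty (h : IsPreHoneycomb L w)
    (hne : (vertexSet (wis L w)).Nonempty) (hS : IsEdgeFor (wis L w) i S) :
    (S ∩ vertexSet (wis L w)).Nonempty := by
  by_contra hempty
  have disjoint : Disjoint S (vertexSet (wis L w)) :=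
    Set.disjoint_iff_inter_eq_empty.2 (Set.not_nonempty_iff_eq_empty.1 hempty)
  obtain ⟨p, hp⟩ := hS.isLineL.nontrivial.nonempty
  obtain ⟨v, hv, hmin⟩ := Set.exists_min_image _ (fun u => |pdot (u - p) (xiv i)|)
    (h.1.finite_vertexSet w) hne
  have pdot_ne_zero : pdot (v - p) (xiv i) ≠ 0 := fun h0 =>
    Set.disjoint_left.1 disjoint (hS.mem_of_disjoint_vertexSet disjoint hp h0) hv
  obtain ⟨q, hq, j, s, hji, hw⟩ := h.exists_pdot_eq_zero_and_wis_ne_zero hv pdot_ne_zero hmin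
  have hqS : q ∈ S := hS.mem_of_disjoint_vertexSet disjoint hp hq
  have hqV := Set.disjoint_left.1 disjoint hqS
  exact hqV ⟨j, i, s, true, hji, hw, hS.ne_zero q (hS.interiorPt_of_notMem hqS hqV)⟩

end Incidence

section Uniqueness

namespace Honeycomb

variable (H : Honeycomb) {e e' : Set Pt} {i : Fin 3} {s : Bool} {x : Pt}

theorem eq_of_interiorPt_of_mem (he : e ∈ H.edges) (he' : e' ∈ H.edges) (hx : InteriorPt e x)
    (hx' : x ∈ e') : e = e' := by
  by_contra hne
  exact H.no_cross e he e' he' hne x hx hx'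

theorem eq_of_hasGerm (he : e ∈ H.edges) (he' : e' ∈ H.edges) (hg : HasGerm e x i s)
    (hg' : HasGerm e' x i s) : e = e' := by
  obtain ⟨y, hy, hy'⟩ := hg.exists_interiorPt_common hg' (H.pre.1 e he).1 (H.pre.1 e' he').1
  exact H.eq_of_interiorPt_of_mem he he' hy hy'.1

theorem wis_eq_w_of_hasGerm (he : e ∈ H.edges) (hg : HasGerm e x i s) :
    wis H.edges H.w i s x = H.w e := by
  have filter_eq : H.edges.filter (HasGerm · x i s) = {e} := by
    ext e'
    simp only [Finset.mem_filter, Finset.mem_singleton]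
    exact ⟨fun h => H.eq_of_hasGerm h.1 he h.2 hg, by rintro rfl; exact ⟨he, hg⟩⟩
  rw [H.pre.1.wis_eq_sum_hasGerm, filter_eq, Finset.sum_singleton]

theorem wis_ne_zero_of_hasGerm (he : e ∈ H.edges) (hg : HasGerm e x i s) :
    wis H.edges H.w i s x ≠ 0 := by
  rw [H.wis_eq_w_of_hasGerm he hg]
  exact (H.w_pos e he).ne'

theorem notMem_vertexSet_of_interiorPt (he : e ∈ H.edges) (hx : InteriorPt e x) :
    x ∉ vertexSet (wis H.edges H.w) := by
  rintro ⟨i, j, s, s', hij, hi, hj⟩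
  obtain ⟨e₁, he₁, hg₁⟩ := H.pre.1.exists_hasGerm_of_wis_ne_zero hi
  obtain ⟨e₂, he₂, hg₂⟩ := H.pre.1.exists_hasGerm_of_wis_ne_zero hj
  obtain rfl := H.eq_of_interiorPt_of_mem he he₁ hx hg₁.1
  obtain rfl := H.eq_of_interiorPt_of_mem he he₂ hx hg₂.1
  obtain ⟨k, hk⟩ := (H.pre.1 e he).2
  exact hij ((hg₁.eq_of_perpTo hk).trans (hg₂.eq_of_perpTo hk).symm)

theorem coe_verts : (H.verts : Set Pt) = vertexSet (wis H.edges H.w) := by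
  ext v
  constructor
  · intro hv
    have exists_germ : ∀ e ∈ H.edges.filter (IsEnd v), ∃ q : Fin 3 × Bool, HasGerm e v q.1 q.2 := by
      intro e he
      obtain ⟨he, hev⟩ := Finset.mem_filter.1 he
      obtain ⟨hl, k, hk⟩ := H.pre.1 e he
      obtain ⟨s, hs⟩ := hl.exists_hasGerm hk hev.1
      exact ⟨(k, s), hs⟩
    choose! f hf using exists_germ
    refine (H.pre.zeroTension v).three_le_card_support_iff.1 <|
      (H.degree v hv).trans <|
        Finset.card_le_card_of_injOn f (fun e he => ?_) fun e he e' he' h => ?_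
    · simpa using H.wis_ne_zero_of_hasGerm (Finset.mem_filter.1 he).1 (hf e he)
    · exact H.eq_of_hasGerm (Finset.mem_filter.1 he).1 (Finset.mem_filter.1 he').1 (hf e he)
        (h ▸ hf e' he')
  · intro hv
    obtain ⟨i, -, s, -, -, hi, -⟩ := id hv
    obtain ⟨e, he, hg⟩ := H.pre.1.exists_hasGerm_of_wis_ne_zero hi
    exact H.ends_mem e he v ⟨hg.1, fun h_int => H.notMem_vertexSet_of_interiorPt he h_int hv⟩

theorem isEdgeFor (he : e ∈ H.edges) (hp : PerpTo i e) :
    IsEdgeFor (wis H.edges H.w) i e where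
  isLineL := (H.pre.1 e he).1
  perpTo := hp
  notMem_vertexSet _ hx := H.notMem_vertexSet_of_interiorPt he hx
  ne_zero _ hx := H.wis_ne_zero_of_hasGerm he
    (((H.pre.1 e he).1.interiorPt_iff_forall_hasGerm hp).1 hx true)
  mem_vertexSet x hx := H.coe_verts ▸ H.ends_mem e he x hx

theorem mem_edges_iff : e ∈ H.edges ↔ ∃ i, IsEdgeFor (wis H.edges H.w) i e := by
  constructor
  · intro he
    obtain ⟨i, hi⟩ := (H.pre.1 e he).2
    exact ⟨i, H.isEdgeFor he hi⟩
  · rintro ⟨i, h⟩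
    obtain ⟨x, hx⟩ := h.isLineL.exists_interiorPt h.perpTo
    obtain ⟨e', he', hg⟩ := H.pre.1.exists_hasGerm_of_wis_ne_zero (h.ne_zero x hx)
    obtain ⟨j, hj⟩ := (H.pre.1 e' he').2
    rwa [h.eq_of_interiorPt_of_mem (H.isEdgeFor he' hj) hx hg.1]

theorem eq_of_wis_eq {H H' : Honeycomb} (h : wis H'.edges H'.w = wis H.edges H.w) :
    H'.verts = H.verts ∧ H'.edges = H.edges ∧ ∀ e ∈ H.edges, H'.w e = H.w e := by
  have edges_eq : H'.edges = H.edges := by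
    ext e
    rw [mem_edges_iff, mem_edges_iff, h]
  refine ⟨Finset.coe_injective (by rw [coe_verts, coe_verts, h]), edges_eq, fun e he => ?_⟩
  obtain ⟨hl, i, hi⟩ := H.pre.1 e he
  obtain ⟨x, hx⟩ := hl.nontrivial.nonempty
  obtain ⟨s, hg⟩ := hl.exists_hasGerm hi hx
  rw [← H'.wis_eq_w_of_hasGerm (edges_eq ▸ he) hg, h, H.wis_eq_w_of_hasGerm he hg]

end Honeycomb

end Uniqueness

section Existence

variable {L : Finset (Set Pt)} {w : Set Pt → ℤ} {i j : Fin 3} {s : Bool} {v x : Pt} {S : Set Pt}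

theorem IsPreHoneycomb.finite_setOf_isEdgeFor (h : IsPreHoneycomb L w)
    (hne : (vertexSet (wis L w)).Nonempty) : {S | ∃ i, IsEdgeFor (wis L w) i S}.Finite := by
  refine ((h.1.finite_vertexSet w).biUnion (t := fun v =>
    ⋃ q : Fin 3 × Bool, {S | IsEdgeFor (wis L w) q.1 S ∧ HasGerm S v q.1 q.2})
    fun v _ => Set.finite_iUnion fun q => Set.Subsingleton.finite fun S hS T hT =>
      hS.1.eq_of_hasGerm hT.1 hS.2 hT.2).subset ?_
  rintro S ⟨i, hS⟩
  obtain ⟨v, hvS, hv⟩ := h.inter_vertexSet_nonempty hne hS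
  obtain ⟨s, hs⟩ := hS.isLineL.exists_hasGerm hS.perpTo hvS
  exact Set.mem_biUnion hv (Set.mem_iUnion.2 ⟨(i, s), hS, hs⟩)

theorem IsPreHoneycomb.exists_edgeWeight (h : IsPreHoneycomb L w) :
    ∃ w' : Set Pt → ℤ, ∀ {S i x s}, IsEdgeFor (wis L w) i S → HasGerm S x i s →
      w' S = wis L w i s x := by
  have exists_weight (S : Set Pt) : ∃ c : ℤ, ∀ i x s, IsEdgeFor (wis L w) i S →
      HasGerm S x i s → c = wis L w i s x := by
    by_cases hS : ∃ i, IsEdgeFor (wis L w) i S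
    · obtain ⟨i, hS⟩ := hS
      obtain ⟨y, hy⟩ := hS.isLineL.exists_interiorPt hS.perpTo
      refine ⟨wis L w i true y, fun j x s hSj hg => ?_⟩
      obtain rfl := hS.isLineL.perpTo_unique hS.perpTo hSj.perpTo
      exact (hS.wis_eq_of_hasGerm h hg hy).symm
    · exact ⟨0, fun i x s hSi => absurd ⟨i, hSi⟩ hS⟩
  choose w' hw' using exists_weight
  exact ⟨w', fun {S i x s} => hw' S i x s⟩

theorem IsPreHoneycomb.wis_eq_of_mem_iff_isEdgeFor (h : IsPreHoneycomb L w)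
    {E : Finset (Set Pt)} (hE : ∀ S, S ∈ E ↔ ∃ i, IsEdgeFor (wis L w) i S) {w' : Set Pt → ℤ}
    (hw' : ∀ {S i x s}, IsEdgeFor (wis L w) i S → HasGerm S x i s → w' S = wis L w i s x) :
    wis E w' = wis L w := by
  have isXiSystem : IsXiSystem E := fun S hS =>
    let ⟨i, hi⟩ := (hE S).1 hS
    ⟨hi.isLineL, i, hi.perpTo⟩
  funext i s x
  have mem_filter_iff (S : Set Pt) :
      S ∈ E.filter (HasGerm · x i s) ↔ IsEdgeFor (wis L w) i S ∧ HasGerm S x i s := by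
    rw [Finset.mem_filter, hE]
    refine and_congr_left fun hg => ⟨?_, fun hS => ⟨i, hS⟩⟩
    rintro ⟨j, hS⟩
    rwa [hg.eq_of_perpTo hS.perpTo]
  rw [isXiSystem.wis_eq_sum_hasGerm]
  by_cases hx : wis L w i s x = 0
  · rw [hx, Finset.sum_eq_zero]
    intro S hS
    rw [mem_filter_iff] at hS
    rw [hw' hS.1 hS.2, hx]
  · obtain ⟨S, hS, hg⟩ := h.exists_isEdgeFor hx
    have filter_eq : E.filter (HasGerm · x i s) = {S} := by
      ext T
      rw [mem_filter_iff, Finset.mem_singleton]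
      exact ⟨fun hT => hT.1.eq_of_hasGerm hS hT.2 hg, by rintro rfl; exact ⟨hS, hg⟩⟩
    rw [filter_eq, Finset.sum_singleton, hw' hS hg]

theorem IsPreHoneycomb.three_le_card_isEnd (h : IsPreHoneycomb L w) {E : Finset (Set Pt)}
    (hE : ∀ i S, IsEdgeFor (wis L w) i S → S ∈ E) (hv : v ∈ vertexSet (wis L w)) :
    3 ≤ (E.filter fun S => IsEnd v S).card := by
  choose! f hf using fun q : Fin 3 × Bool => h.exists_isEdgeFor (i := q.1) (s := q.2) (x := v)
  have isEnd {q : Fin 3 × Bool} (hq : wis L w q.1 q.2 v ≠ 0) : IsEnd v (f q) :=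
    ⟨(hf q hq).2.1, fun h_int => (hf q hq).1.notMem_vertexSet v h_int hv⟩
  refine ((h.zeroTension v).three_le_card_support_iff.2 hv).trans <|
    Finset.card_le_card_of_injOn f (fun q hq => ?_) ?_
  · replace hq := (Finset.mem_filter.1 hq).2
    simpa using ⟨hE _ _ (hf q hq).1, isEnd hq⟩
  · rintro ⟨i, s⟩ hq ⟨j, s'⟩ hr heq
    replace hq := (Finset.mem_filter.1 hq).2
    replace hr := (Finset.mem_filter.1 hr).2
    obtain ⟨hS, hg⟩ := hf (i, s) hq
    have hg' := (hf (j, s') hr).2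
    rw [← heq] at hg'
    obtain rfl := hg'.eq_of_perpTo hS.perpTo
    exact Prod.ext rfl (hg.eq_of_isEnd hg' hS.isLineL hS.perpTo (isEnd hq))

theorem IsPreHoneycomb.exists_honeycomb (h : IsPreHoneycomb L w)
    (hne : (vertexSet (wis L w)).Nonempty) :
    ∃ H : Honeycomb, wis H.edges H.w = wis L w := by
  obtain ⟨E, hE⟩ := (h.finite_setOf_isEdgeFor hne).exists_finset
  obtain ⟨V, hV⟩ := (h.1.finite_vertexSet w).exists_finset
  obtain ⟨w', hw'⟩ := h.exists_edgeWeight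
  have wis_eq : wis E w' = wis L w := h.wis_eq_of_mem_iff_isEdgeFor hE hw'
  have w'_pos : ∀ S ∈ E, 0 < w' S := by
    intro S hS
    obtain ⟨i, hi⟩ := (hE S).1 hS
    obtain ⟨x, hx⟩ := hi.isLineL.exists_interiorPt hi.perpTo
    rw [hw' hi ((hi.isLineL.interiorPt_iff_forall_hasGerm hi.perpTo).1 hx true)]
    exact (h.2.1 x i true).lt_of_ne' (hi.ne_zero x hx)
  refine ⟨{
    verts := V
    edges := E
    w := w'
    verts_nonempty := hne.imp fun v hv => (hV v).2 hv
    degree := fun v hv => h.three_le_card_isEnd (fun i S hS => (hE S).2 ⟨i, hS⟩) ((hV v).1 hv)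
    no_cross := fun S hS T hT hST x hxS hxT =>
      let ⟨_, hS⟩ := (hE S).1 hS
      let ⟨_, hT⟩ := (hE T).1 hT
      hST (hS.eq_of_interiorPt_of_mem hT hxS hxT)
    w_pos := w'_pos
    ends_mem := fun S hS x hx =>
      let ⟨_, hS⟩ := (hE S).1 hS
      (hV x).2 (hS.mem_vertexSet x hx)
    edge_touch := fun S hS =>
      let ⟨_, hS⟩ := (hE S).1 hS
      let ⟨v, hvS, hv⟩ := h.inter_vertexSet_nonempty hne hS
      ⟨v, (hV v).2 hv, hvS⟩
    pre := ⟨fun S hS => let ⟨i, hi⟩ := (hE S).1 hS; ⟨hi.isLineL, i, hi.perpTo⟩, ?_⟩ }, wis_eq⟩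
  simpa only [wis_eq] using h.2

end Existence

/-- A pre-honeycomb (L,w) such that the set V of points at which at
least three of the six numbers w_i^s(·) are nonzero is nonempty determines a unique
honeycomb with the same numbers w_i^s everywhere; its vertex set is exactly V. -/
theorem stmt12 (L : Finset (Set Pt)) (w : Set Pt → ℤ) (hpre : IsPreHoneycomb L w)
    (V : Set Pt)
    (hV : V = {v : Pt |
      3 ≤ ((Finset.univ : Finset (Fin 3 × Bool)).filter
        fun p => wis L w p.1 p.2 v ≠ 0).card})
    (hne : V.Nonempty) :
    ∃ H : Honeycomb,
      (∀ (i : Fin 3) (s : Bool) (v : Pt), wis H.edges H.w i s v = wis L w i s v) ∧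
      (↑H.verts : Set Pt) = V ∧
      ∀ H' : Honeycomb,
        (∀ (i : Fin 3) (s : Bool) (v : Pt), wis H'.edges H'.w i s v = wis L w i s v) →
        H'.verts = H.verts ∧ H'.edges = H.edges ∧ ∀ e ∈ H.edges, H'.w e = H.w e := by
  have eq_vertexSet : V = vertexSet (wis L w) := by
    rw [hV]
    ext v
    exact (hpre.zeroTension v).three_le_card_support_iff
  obtain ⟨H, hH⟩ := hpre.exists_honeycomb (eq_vertexSet ▸ hne)
  refine ⟨H, fun i s v => by rw [hH], by rw [H.coe_verts, hH, eq_vertexSet], fun H' hH' =>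
    Honeycomb.eq_of_wis_eq ?_⟩
  rw [hH]
  funext i s v
  exact hH' i s v

end
end

section
/- For every positive integer k there exist a convex triangular grid G whose region R(G) is a hexagon with two opposite sides of length 1 and the other four sides of length k, and a function h₀ : B(G) → ℤ, such that the polyhedron C(G,h₀) has a vertex (extreme point) h satisfying h(e) = −1/k for some edge e of G and |h(e')| < 2k for all edges e' of G. -/
open scoped BigOperators

attribute [local instance] Classical.propDecidable

noncomputable section

/-- Directed edges: ordered pairs of points. -/
abbrev Ed : Type := Pt × Pt

/-- A little (lattice) triangle of the triangular grid, given by its base point and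
its orientation (`up = true` for an upward triangle). -/
structure GridTriangle : Type where
  base : Pt
  up : Bool

noncomputable def GridTriangle.v0 (T : GridTriangle) : Pt := T.base
noncomputable def GridTriangle.v1 (T : GridTriangle) : Pt := T.base + xiv 0
noncomputable def GridTriangle.v2 (T : GridTriangle) : Pt :=
  if T.up then T.base + xiv 0 + xiv 1 else T.base + xiv 0 + xiv 2

/-- The three directed edges of the 3-circuit surrounding a little triangle;
each has direction ξ₁, ξ₂ or ξ₃. -/
noncomputable def GridTriangle.e0 (T : GridTriangle) : Ed := (T.v0, T.v1)
noncomputable def GridTriangle.e1 (T : GridTriangle) : Ed := (T.v1, T.v2)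
noncomputable def GridTriangle.e2 (T : GridTriangle) : Ed := (T.v2, T.v0)

noncomputable def GridTriangle.edgeFinset (T : GridTriangle) : Finset Ed := {T.e0, T.e1, T.e2}

/-- The closed region spanned by a little triangle. -/
noncomputable def GridTriangle.region (T : GridTriangle) : Set Pt :=
  convexHull ℝ {T.v0, T.v1, T.v2}

/-- Vectors of the lattice generated by ξ₁ and ξ₂. -/
def IsLatticeVec (p : Pt) : Prop := ∃ m n : ℤ, p = (m : ℝ) • xiv 0 + (n : ℝ) • xiv 1

/-- A convex triangular grid: a finite nonempty set of little triangles of a common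
translate of the triangular lattice whose union is a convex polygon.  (Its vertices,
edges, bounded faces and boundary are then those of the planar digraph formed by the
edges of the little triangles.) -/
structure ConvexGrid : Type where
  tris : Finset GridTriangle
  nonempty : tris.Nonempty
  aligned : ∀ T ∈ tris, ∀ T' ∈ tris, IsLatticeVec (T.base - T'.base)
  convex : Convex ℝ (⋃ T ∈ tris, GridTriangle.region T)

/-- The region R(G) spanned by the grid. -/
noncomputable def ConvexGrid.region (G : ConvexGrid) : Set Pt :=
  ⋃ T ∈ G.tris, GridTriangle.region T

/-- The (directed) edge set E(G) of the grid. -/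
noncomputable def ConvexGrid.edges (G : ConvexGrid) : Finset Ed :=
  G.tris.biUnion GridTriangle.edgeFinset

/-- The boundary edges B(G): edges lying in exactly one little triangle. -/
noncomputable def ConvexGrid.boundary (G : ConvexGrid) : Finset Ed :=
  G.edges.filter fun e => (G.tris.filter fun T => e ∈ T.edgeFinset).card = 1

/-- A cocirculation: `h(e)+h(e')+h(e'')=0` around each little triangle. -/
def IsCocirculation (G : ConvexGrid) (h : Ed → ℝ) : Prop :=
  ∀ T ∈ G.tris, h T.e0 + h T.e1 + h T.e2 = 0

/-- `g` coincides with an affine function on `S`. -/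
def AffineOn (g : Pt → ℝ) (S : Set Pt) : Prop :=
  ∃ φ : Pt →ᵃ[ℝ] ℝ, ∀ x ∈ S, g x = φ x

/-- A concave cocirculation: a cocirculation induced by a concave function on R(G)
which is affinely linear within each little triangle. -/
def IsConcaveCocirculation (G : ConvexGrid) (h : Ed → ℝ) : Prop :=
  IsCocirculation G h ∧
  ∃ g : Pt → ℝ, ConcaveOn ℝ G.region g ∧ (∀ T ∈ G.tris, AffineOn g T.region) ∧
    ∀ e ∈ G.edges, h e = g e.2 - g e.1

/-- The polyhedron C(G,h₀) of concave cocirculations agreeing with h₀ on F. -/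
def CC (G : ConvexGrid) (F : Set Ed) (h₀ : Ed → ℝ) : Set (Ed → ℝ) :=
  {h | IsConcaveCocirculation G h ∧ ∀ e ∈ F, h e = h₀ e}

/-- `h` is a vertex (extreme point) of the set `C` of cocirculations, regarded as a
subset of ℝ^{E(G)} (only the coordinates on the edges of `G` matter). -/
def IsVertexOf (G : ConvexGrid) (C : Set (Ed → ℝ)) (h : Ed → ℝ) : Prop :=
  h ∈ C ∧ ∀ h₁ ∈ C, ∀ h₂ ∈ C,
    (∀ e ∈ G.edges, h e = (h₁ e + h₂ e) / 2) → ∀ e ∈ G.edges, h₁ e = h₂ e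

/-!
A concave cocirculation on a convex grid is the increment of a function on lattice points that
satisfies the rhombus inequalities across all inner edges. Conversely, such a function extends to a
concave one, the lower envelope of its affine interpolations on the little triangles. The
cocirculation is a vertex of its polyhedron as soon as the rhombus inequalities that are tight for
it, together with the boundary values, force every perturbation to vanish.

For `2 ≤ k` we choose a function on the hexagon that is affine across all inner edges of direction
`ξ₂` below the horizontal symmetry axis and of direction `ξ₃` above it, away from the two sides
meeting at the leftmost vertex. These tight inequalities carry the vanishing of a perturbation
from the right-hand boundary to the whole hexagon, provided that it vanishes on the axis. There it
is an arithmetic progression whose last term vanishes, and one more tight rhombus at the leftmost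
vertex makes the first term vanish too. The axis contains `k` edges between these two terms, while
the function falls by only `1` along them, hence by `1 / k` along each.
-/

namespace HexGrid

section Plane

/-- First coordinate in the basis `(-ξ₂, -ξ₃)` of the plane. -/
def xCoord : Pt →ₗ[ℝ] ℝ := LinearMap.fst ℝ ℝ ℝ - (1 / √3) • LinearMap.snd ℝ ℝ ℝ

/-- Second coordinate in the basis `(-ξ₂, -ξ₃)` of the plane. -/
def yCoord : Pt →ₗ[ℝ] ℝ := LinearMap.fst ℝ ℝ ℝ + (1 / √3) • LinearMap.snd ℝ ℝ ℝ

/-- The lattice point with coordinates `(a, b)`. In these coordinates `ξ₁, ξ₂, ξ₃` become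
`(1, 1), (-1, 0), (0, -1)`, so that all lattice computations are integral. -/
def node (a b : ℤ) : Pt := -((a : ℝ) • xiv 1) - (b : ℝ) • xiv 2

@[simp] lemma xCoord_xiv_zero : xCoord (xiv 0) = 1 := by simp [xCoord, xiv]

@[simp] lemma yCoord_xiv_zero : yCoord (xiv 0) = 1 := by simp [yCoord, xiv]

@[simp] lemma xCoord_xiv_one : xCoord (xiv 1) = -1 := by
  simp only [xCoord, xiv, LinearMap.sub_apply, LinearMap.smul_apply, LinearMap.fst_apply,
    LinearMap.snd_apply, smul_eq_mul]
  field_simp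
  norm_num

@[simp] lemma yCoord_xiv_one : yCoord (xiv 1) = 0 := by
  simp only [yCoord, xiv, LinearMap.add_apply, LinearMap.smul_apply, LinearMap.fst_apply,
    LinearMap.snd_apply, smul_eq_mul]
  field_simp
  norm_num

@[simp] lemma xCoord_xiv_two : xCoord (xiv 2) = 0 := by
  simp only [xCoord, xiv, LinearMap.sub_apply, LinearMap.smul_apply, LinearMap.fst_apply,
    LinearMap.snd_apply, smul_eq_mul]
  field_simp
  norm_num

@[simp] lemma yCoord_xiv_two : yCoord (xiv 2) = -1 := by
  simp only [yCoord, xiv, LinearMap.add_apply, LinearMap.smul_apply, LinearMap.fst_apply,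
    LinearMap.snd_apply, smul_eq_mul]
  field_simp
  norm_num

@[simp] lemma xCoord_node (a b : ℤ) : xCoord (node a b) = a := by simp [node]

@[simp] lemma yCoord_node (a b : ℤ) : yCoord (node a b) = b := by simp [node]

lemma ext_coord {p q : Pt} (hx : xCoord p = xCoord q) (hy : yCoord p = yCoord q) : p = q := by
  simp only [xCoord, yCoord, LinearMap.sub_apply, LinearMap.add_apply, LinearMap.smul_apply,
    LinearMap.fst_apply, LinearMap.snd_apply, smul_eq_mul] at hx hy
  have h_snd : 1 / √3 * p.2 = 1 / √3 * q.2 := by linarith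
  exact Prod.ext (by linarith) (mul_left_cancel₀ (by positivity) h_snd)

@[simp] lemma node_inj {a b c d : ℤ} : node a b = node c d ↔ a = c ∧ b = d := by
  refine ⟨fun h => ⟨?_, ?_⟩, fun h => by rw [h.1, h.2]⟩
  · exact_mod_cast (xCoord_node a b).symm.trans (h ▸ xCoord_node c d)
  · exact_mod_cast (yCoord_node a b).symm.trans (h ▸ yCoord_node c d)

end Plane

section Convexity

variable {𝕜 E : Type*} [Field 𝕜] [LinearOrder 𝕜] [IsStrictOrderedRing 𝕜] [AddCommGroup E]
  [Module 𝕜 E]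

lemma combo_mem_of_convex {s : Set E} (hs : Convex 𝕜 s) {x y z : E} (hx : x ∈ s) (hy : y ∈ s)
    (hz : z ∈ s) {a b c : 𝕜} (ha : 0 ≤ a) (hb : 0 ≤ b) (hc : 0 ≤ c) (habc : a + b + c = 1) :
    a • x + b • y + c • z ∈ s := by
  have h_sum : ∑ i, ![a, b, c] i • ![x, y, z] i ∈ s :=
    hs.sum_mem (fun i _ => by fin_cases i <;> assumption)
      (by simpa [Fin.sum_univ_three] using habc) (fun i _ => by fin_cases i <;> assumption)
  simpa [Fin.sum_univ_three] using h_sum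

/-- Cut the trapezoid into two triangles along its diagonal through the origin. -/
lemma trapezoid_mem_of_convex {s : Set E} (hs : Convex 𝕜 s) {u v : E} {k x y : 𝕜} (hk : 0 < k)
    (h_zero : 0 ∈ s) (hu : k • u ∈ s) (huv : (k + 1) • u + v ∈ s)
    (h_top : (k + 1) • u + (k + 1) • v ∈ s) (hy : 0 ≤ y) (hyx : y ≤ x) (hx : x ≤ k + 1)
    (hxy : x - y ≤ k) : x • u + y • v ∈ s := by
  have hk1 : 0 < k + 1 := by linarith
  rcases le_total ((k + 1) * y) x with h | h
  · have h_combo := combo_mem_of_convex hs h_zero hu huv (a := (k - x + y) / k)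
      (b := (x - (k + 1) * y) / k) (c := y) (div_nonneg (by linarith) hk.le)
      (div_nonneg (by linarith) hk.le) hy (by field_simp; ring)
    convert h_combo using 1
    match_scalars <;> field_simp
    ring
  · have h_combo := combo_mem_of_convex hs h_zero huv h_top (a := (k + 1 - x) / (k + 1))
      (b := (x - y) / k) (c := ((k + 1) * y - x) / (k * (k + 1)))
      (div_nonneg (by linarith) hk1.le) (div_nonneg (by linarith) hk.le)
      (div_nonneg (by linarith) (by positivity)) (by field_simp; ring)
    convert h_combo using 1
    match_scalars <;> field_simp <;> ring

end Convexity

section Grid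

variable (k : ℕ)

/-- The hexagon in lattice coordinates: `0 ≤ a, b ≤ k + 1` and `|a - b| ≤ k`. -/
def InHex (a b : ℤ) : Prop :=
  0 ≤ a ∧ a ≤ k + 1 ∧ 0 ≤ b ∧ b ≤ k + 1 ∧ a - b ≤ k ∧ b - a ≤ k

/-- The lattice points on the boundary of the hexagon. Those on the two sides `a - b = ±k` of
length one are the endpoints of these sides, so they also lie on the other four. -/
def OnPerimeter (a b : ℤ) : Prop :=
  InHex k a b ∧ (a = 0 ∨ a = k + 1 ∨ b = 0 ∨ b = k + 1)

/-- The hexagonal region of the plane that is to be triangulated. -/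
def hexRegion : Set Pt :=
  xCoord ⁻¹' Set.Icc 0 (k + 1) ∩ yCoord ⁻¹' Set.Icc 0 (k + 1) ∩
    (xCoord - yCoord) ⁻¹' Set.Icc (-k) k

variable {k} in
lemma mem_hexRegion {p : Pt} : p ∈ hexRegion k ↔
    ((0 ≤ xCoord p ∧ xCoord p ≤ k + 1) ∧ 0 ≤ yCoord p ∧ yCoord p ≤ k + 1) ∧
      -k ≤ xCoord p - yCoord p ∧ xCoord p - yCoord p ≤ k :=
  Iff.rfl

lemma convex_hexRegion : Convex ℝ (hexRegion k) :=
  (((convex_Icc _ _).linear_preimage xCoord).inter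
    ((convex_Icc _ _).linear_preimage yCoord)).inter ((convex_Icc _ _).linear_preimage _)

variable {k} in
lemma node_mem_hexRegion {a b : ℤ} : node a b ∈ hexRegion k ↔ InHex k a b := by
  rw [mem_hexRegion, xCoord_node, yCoord_node]
  norm_cast
  unfold InHex
  omega

/-- Index of a little triangle: `(i, j, u)` has its left vertex at `node i j` and points
upwards exactly when `u = true`. -/
abbrev Cell : Type := ℤ × ℤ × Bool

/-- The little triangle with a given index. -/
def cellTri (t : Cell) : GridTriangle := ⟨node t.1 t.2.1, t.2.2⟩

lemma cellTri_injective : Function.Injective cellTri := by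
  rintro ⟨i, j, u⟩ ⟨i', j', u'⟩ h
  obtain ⟨h_base, h_up⟩ := GridTriangle.mk.inj h
  obtain ⟨rfl, rfl⟩ := node_inj.1 h_base
  exact congrArg (i, j, ·) h_up

@[simp] lemma cellTri_v0 (i j : ℤ) (u : Bool) : (cellTri (i, j, u)).v0 = node i j := rfl

@[simp] lemma cellTri_v1 (i j : ℤ) (u : Bool) :
    (cellTri (i, j, u)).v1 = node (i + 1) (j + 1) :=
  ext_coord (by simp [cellTri, GridTriangle.v1]) (by simp [cellTri, GridTriangle.v1])

@[simp] lemma cellTri_true_v2 (i j : ℤ) : (cellTri (i, j, true)).v2 = node i (j + 1) :=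
  ext_coord (by simp [cellTri, GridTriangle.v2]) (by simp [cellTri, GridTriangle.v2])

@[simp] lemma cellTri_false_v2 (i j : ℤ) : (cellTri (i, j, false)).v2 = node (i + 1) j :=
  ext_coord (by simp [cellTri, GridTriangle.v2]) (by simp [cellTri, GridTriangle.v2])

lemma cellTri_region_subset_iff {s : Set Pt} (hs : Convex ℝ s) (t : Cell) :
    (cellTri t).region ⊆ s ↔ (cellTri t).v0 ∈ s ∧ (cellTri t).v1 ∈ s ∧ (cellTri t).v2 ∈ s := by
  rw [GridTriangle.region, hs.convexHull_subset_iff]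
  simp only [Set.insert_subset_iff, Set.singleton_subset_iff]

lemma convex_region (T : GridTriangle) : Convex ℝ T.region := convex_convexHull ℝ _

lemma node_mem_cellTri_true_region (i j : ℤ) : node i j ∈ (cellTri (i, j, true)).region ∧
    node (i + 1) (j + 1) ∈ (cellTri (i, j, true)).region ∧
    node i (j + 1) ∈ (cellTri (i, j, true)).region := by
  simpa using (cellTri_region_subset_iff (convex_region (cellTri (i, j, true))) _).1 le_rfl

lemma node_mem_cellTri_false_region (i j : ℤ) : node i j ∈ (cellTri (i, j, false)).region ∧
    node (i + 1) (j + 1) ∈ (cellTri (i, j, false)).region ∧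
    node (i + 1) j ∈ (cellTri (i, j, false)).region := by
  simpa using (cellTri_region_subset_iff (convex_region (cellTri (i, j, false))) _).1 le_rfl

lemma mem_cellTri_true_region {i j : ℤ} {p : Pt} (hi : i ≤ xCoord p)
    (hij : xCoord p - i ≤ yCoord p - j) (hj : yCoord p ≤ j + 1) :
    p ∈ (cellTri (i, j, true)).region := by
  obtain ⟨h₀, h₁, h₂⟩ := node_mem_cellTri_true_region i j
  convert combo_mem_of_convex (convex_region _) h₀ h₁ h₂
    (a := j + 1 - yCoord p) (b := xCoord p - i) (c := yCoord p - j - (xCoord p - i))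
    (by linarith) (by linarith) (by linarith) (by ring) using 1
  apply ext_coord <;> simp <;> ring

lemma mem_cellTri_false_region {i j : ℤ} {p : Pt} (hi : xCoord p ≤ i + 1)
    (hij : yCoord p - j ≤ xCoord p - i) (hj : j ≤ yCoord p) :
    p ∈ (cellTri (i, j, false)).region := by
  obtain ⟨h₀, h₁, h₂⟩ := node_mem_cellTri_false_region i j
  convert combo_mem_of_convex (convex_region _) h₀ h₁ h₂
    (a := i + 1 - xCoord p) (b := yCoord p - j) (c := xCoord p - i - (yCoord p - j))
    (by linarith) (by linarith) (by linarith) (by ring) using 1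
  apply ext_coord <;> simp <;> ring

/-- The little triangles that make up the hexagon. -/
def cells : Finset Cell :=
  (Finset.Icc 0 (k : ℤ) ×ˢ Finset.Icc 0 (k : ℤ) ×ˢ Finset.univ).filter fun t =>
    if t.2.2 then t.2.1 - t.1 < k else t.1 - t.2.1 < k

variable {k}

@[simp] lemma mem_cells_true {i j : ℤ} : (i, j, true) ∈ cells k ↔
    0 ≤ i ∧ i ≤ k ∧ 0 ≤ j ∧ j ≤ k ∧ j - i < k := by
  simp [cells, and_assoc]

@[simp] lemma mem_cells_false {i j : ℤ} : (i, j, false) ∈ cells k ↔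
    0 ≤ i ∧ i ≤ k ∧ 0 ≤ j ∧ j ≤ k ∧ i - j < k := by
  simp [cells, and_assoc]

lemma exists_unit_interval {x : ℝ} (h_zero : 0 ≤ x) (hx : x ≤ k + 1) :
    ∃ i : ℤ, 0 ≤ i ∧ i ≤ k ∧ i ≤ x ∧ x ≤ i + 1 := by
  rcases le_total x k with h | h
  · exact ⟨⌊x⌋, Int.floor_nonneg.2 h_zero, by exact_mod_cast (Int.floor_le x).trans h,
      Int.floor_le x, (Int.lt_floor_add_one x).le⟩
  · exact ⟨k, by positivity, le_rfl, by exact_mod_cast h, by exact_mod_cast hx⟩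

lemma cellTri_region_subset {t : Cell} (ht : t ∈ cells k) :
    (cellTri t).region ⊆ hexRegion k := by
  rw [cellTri_region_subset_iff (convex_hexRegion k)]
  obtain ⟨i, j, _ | _⟩ := t <;>
    simp only [mem_cells_true, mem_cells_false] at ht <;>
    simp only [cellTri_v0, cellTri_v1, cellTri_true_v2, cellTri_false_v2, node_mem_hexRegion,
      InHex] <;>
    omega

variable [NeZero k]

lemma hexRegion_subset {s : Set Pt} (hs : Convex ℝ s) (h₁ : node k 0 ∈ s)
    (h₂ : node (k + 1) 1 ∈ s) (h₃ : node (k + 1) (k + 1) ∈ s) (h₄ : node 1 (k + 1) ∈ s)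
    (h₅ : node 0 k ∈ s) (h₆ : node 0 0 ∈ s) : hexRegion k ⊆ s := by
  intro p hp
  have hk : (0 : ℝ) < k := Nat.cast_pos.2 (NeZero.pos k)
  have h_node (a b : ℤ) : node a b = (a : ℝ) • node 1 0 + (b : ℝ) • node 0 1 :=
    ext_coord (by simp) (by simp)
  have h_decomp : p = xCoord p • node 1 0 + yCoord p • node 0 1 :=
    ext_coord (by simp) (by simp)
  obtain ⟨⟨⟨hx0, hx1⟩, hy0, hy1⟩, hxy0, hxy1⟩ := mem_hexRegion.1 hp
  rw [h_node] at h₁ h₂ h₃ h₄ h₅ h₆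
  push_cast [one_smul, zero_smul, add_zero, zero_add] at h₁ h₂ h₃ h₄ h₅ h₆
  rw [h_decomp]
  rcases le_total (yCoord p) (xCoord p) with h | h
  · exact trapezoid_mem_of_convex hs hk h₆ h₁ h₂ h₃ hy0 h hx1 hxy1
  · rw [add_comm] at h₃ h₄ ⊢
    exact trapezoid_mem_of_convex hs hk h₆ h₅ h₄ h₃ hx0 h hy1 (by linarith)

lemma exists_mem_cellTri_region {p : Pt} (hp : p ∈ hexRegion k) :
    ∃ t ∈ cells k, p ∈ (cellTri t).region := by
  obtain ⟨⟨⟨hx0, hx1⟩, hy0, hy1⟩, hxy0, hxy1⟩ := mem_hexRegion.1 hp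
  obtain ⟨i, hi0, hik, hi1, hi2⟩ := exists_unit_interval hx0 hx1
  obtain ⟨j, hj0, hjk, hj1, hj2⟩ := exists_unit_interval hy0 hy1
  have hk : 0 < k := NeZero.pos k
  -- If `j - i = k` the upper half-cell sticks out, but then `p` lies on its lower edge.
  have h_half : (xCoord p - i ≤ yCoord p - j ∧ j - i < k) ∨
      (yCoord p - j ≤ xCoord p - i ∧ i - j < k) := by
    by_cases h_up : j - i < k
    · by_cases h_down : i - j < k
      · exact (le_total _ _).imp (⟨·, h_up⟩) (⟨·, h_down⟩)
      · have : (k : ℝ) ≤ i - j := by exact_mod_cast not_lt.1 h_down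
        exact .inl ⟨by linarith, h_up⟩
    · have : (k : ℝ) ≤ j - i := by exact_mod_cast not_lt.1 h_up
      exact .inr ⟨by linarith, by omega⟩
  rcases h_half with ⟨h, hij⟩ | ⟨h, hij⟩
  · exact ⟨(i, j, true), mem_cells_true.2 ⟨hi0, hik, hj0, hjk, hij⟩,
      mem_cellTri_true_region hi1 h hj2⟩
  · exact ⟨(i, j, false), mem_cells_false.2 ⟨hi0, hik, hj0, hjk, hij⟩,
      mem_cellTri_false_region hi2 h hj1⟩

variable (k)

lemma cells_nonempty : (cells k).Nonempty :=
  ⟨(0, 0, true), by simpa using NeZero.pos k⟩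

lemma iUnion_cellTri_region :
    ⋃ T ∈ (cells k).image cellTri, GridTriangle.region T = hexRegion k := by
  rw [Finset.set_biUnion_finset_image]
  refine Set.Subset.antisymm (Set.iUnion₂_subset fun t ht => cellTri_region_subset ht) ?_
  intro p hp
  simpa using exists_mem_cellTri_region hp

/-- The convex grid triangulating the hexagon with side lengths `1, k, k, 1, k, k`. -/
def grid : ConvexGrid where
  tris := (cells k).image cellTri
  nonempty := (cells_nonempty k).image _
  aligned := by
    simp only [Finset.forall_mem_image]
    rintro ⟨i, j, u⟩ - ⟨i', j', u'⟩ -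
    refine ⟨j - j', j - j' - (i - i'), ext_coord ?_ ?_⟩ <;>
      simp [cellTri]
  convex := iUnion_cellTri_region k ▸ convex_hexRegion k

lemma grid_region : (grid k).region = hexRegion k := iUnion_cellTri_region k

lemma hexRegion_eq_convexHull : hexRegion k = convexHull ℝ
    {node k 0, node (k + 1) 1, node (k + 1) (k + 1), node 1 (k + 1), node 0 k, node 0 0} := by
  refine Set.Subset.antisymm ?_ ((convex_hexRegion k).convexHull_subset_iff.2 ?_)
  · have h_corner := subset_convexHull ℝ
      {node k 0, node (k + 1) 1, node (k + 1) (k + 1), node 1 (k + 1), node 0 k, node 0 0}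
    simp only [Set.insert_subset_iff, Set.singleton_subset_iff] at h_corner
    obtain ⟨h₁, h₂, h₃, h₄, h₅, h₆⟩ := h_corner
    exact hexRegion_subset (convex_convexHull ℝ _) h₁ h₂ h₃ h₄ h₅ h₆
  · have := NeZero.pos k
    simp only [Set.insert_subset_iff, Set.singleton_subset_iff, node_mem_hexRegion, InHex]
    omega

end Grid

section Edges

/-- The three directed edges of the upward triangle with left vertex `node i j`. Each edge of the
grid is of this form, whether or not that triangle belongs to the grid. -/
def edge (i j : ℤ) : Fin 3 → Ed
  | 0 => (node i j, node (i + 1) (j + 1))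
  | 1 => (node (i + 1) (j + 1), node i (j + 1))
  | 2 => (node i (j + 1), node i j)

/-- The downward triangle on the other side of `edge i j m`. -/
def neighbour (i j : ℤ) : Fin 3 → Cell
  | 0 => (i, j, false)
  | 1 => (i, j + 1, false)
  | 2 => (i - 1, j, false)

lemma edge_mem_cellTri_iff {i j : ℤ} {m : Fin 3} {t : Cell} :
    edge i j m ∈ (cellTri t).edgeFinset ↔ t = (i, j, true) ∨ t = neighbour i j m := by
  obtain ⟨i', j', _ | _⟩ := t <;> fin_cases m <;>
    simp [edge, neighbour, GridTriangle.edgeFinset, GridTriangle.e0, GridTriangle.e1,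
      GridTriangle.e2] <;>
    omega

lemma exists_eq_edge {t : Cell} {e : Ed} (he : e ∈ (cellTri t).edgeFinset) :
    ∃ i j m, e = edge i j m := by
  obtain ⟨i, j, _ | _⟩ := t <;>
    simp only [GridTriangle.edgeFinset, GridTriangle.e0, GridTriangle.e1, GridTriangle.e2,
      cellTri_v0, cellTri_v1, cellTri_true_v2, cellTri_false_v2, Finset.mem_insert,
      Finset.mem_singleton] at he <;>
    rcases he with rfl | rfl | rfl
  · exact ⟨i, j, 0, rfl⟩
  · exact ⟨i + 1, j, 2, rfl⟩
  · exact ⟨i, j - 1, 1, by simp [edge]⟩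
  · exact ⟨i, j, 0, rfl⟩
  · exact ⟨i, j, 1, rfl⟩
  · exact ⟨i, j, 2, rfl⟩

variable {k : ℕ} [NeZero k]

lemma edge_mem_edges_iff {i j : ℤ} {m : Fin 3} :
    edge i j m ∈ (grid k).edges ↔ (i, j, true) ∈ cells k ∨ neighbour i j m ∈ cells k := by
  simp only [ConvexGrid.edges, grid, Finset.mem_biUnion, Finset.exists_mem_image,
    edge_mem_cellTri_iff]
  constructor
  · rintro ⟨t, ht, rfl | rfl⟩
    exacts [.inl ht, .inr ht]
  · rintro (h | h)
    exacts [⟨_, h, .inl rfl⟩, ⟨_, h, .inr rfl⟩]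

lemma forall_mem_edges {P : Ed → Prop} : (∀ e ∈ (grid k).edges, P e) ↔
    ∀ i j m, edge i j m ∈ (grid k).edges → P (edge i j m) := by
  refine ⟨fun h i j m hm => h _ hm, fun h e he => ?_⟩
  obtain ⟨T, hT, heT⟩ := Finset.mem_biUnion.1 he
  obtain ⟨t, -, rfl⟩ := Finset.mem_image.1 hT
  obtain ⟨i, j, m, rfl⟩ := exists_eq_edge heT
  exact h i j m he

lemma edge_mem_boundary_iff {i j : ℤ} {m : Fin 3} :
    edge i j m ∈ (grid k).boundary ↔ Xor ((i, j, true) ∈ cells k) (neighbour i j m ∈ cells k) := by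
  have h_ne : (i, j, true) ≠ neighbour i j m := by fin_cases m <;> simp [neighbour]
  have h_filter : ((grid k).tris.filter fun T => edge i j m ∈ T.edgeFinset) =
      (({(i, j, true), neighbour i j m} : Finset Cell).filter (· ∈ cells k)).image cellTri := by
    ext T
    simp only [grid, Finset.mem_filter, Finset.mem_image, Finset.mem_insert, Finset.mem_singleton]
    constructor
    · rintro ⟨⟨t, ht, rfl⟩, h⟩
      exact ⟨t, ⟨edge_mem_cellTri_iff.1 h, ht⟩, rfl⟩
    · rintro ⟨t, ⟨h, ht⟩, rfl⟩
      exact ⟨⟨t, ht, rfl⟩, edge_mem_cellTri_iff.2 h⟩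
  rw [ConvexGrid.boundary, Finset.mem_filter, edge_mem_edges_iff, h_filter,
    Finset.card_image_of_injective _ cellTri_injective, Finset.filter_insert,
    Finset.filter_singleton]
  by_cases h₁ : (i, j, true) ∈ cells k <;> by_cases h₂ : neighbour i j m ∈ cells k <;>
    simp [Xor, h₁, h₂, h_ne]

end Edges

section Rhombus

/-- The increment of a function on lattice points along `edge i j m`. -/
def edgeDiff {A : Type*} [Sub A] (F : ℤ → ℤ → A) (i j : ℤ) : Fin 3 → A
  | 0 => F (i + 1) (j + 1) - F i j
  | 1 => F i (j + 1) - F (i + 1) (j + 1)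
  | 2 => F i j - F i (j + 1)

/-- The amount by which `F` is concave across `edge i j m`: the sum of `F` over the endpoints of
this edge minus its sum over the other two vertices of the surrounding rhombus, written as the
difference of the increments along two parallel sides of the rhombus. -/
def defect {A : Type*} [Sub A] (F : ℤ → ℤ → A) (i j : ℤ) : Fin 3 → A
  | 0 => edgeDiff F i j 2 - edgeDiff F (i + 1) j 2
  | 1 => edgeDiff F i j 0 - edgeDiff F i (j + 1) 0
  | 2 => edgeDiff F i j 1 - edgeDiff F (i - 1) (j - 1) 1

/-- Discrete concavity on the grid: the rhombus inequalities across all inner edges. -/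
def RhombusConcave (k : ℕ) (F : ℤ → ℤ → ℝ) : Prop :=
  ∀ i j m, (i, j, true) ∈ cells k → neighbour i j m ∈ cells k → 0 ≤ defect F i j m

/-- The affine function that agrees with `F` at the vertices of a little triangle. -/
def interp (F : ℤ → ℤ → ℝ) : Cell → Pt →ᵃ[ℝ] ℝ
  | (i, j, true) =>
      (F (i + 1) (j + 1) - F i (j + 1)) • (xCoord.toAffineMap - AffineMap.const ℝ Pt (i : ℝ)) +
      (F i (j + 1) - F i j) • (yCoord.toAffineMap - AffineMap.const ℝ Pt (j : ℝ)) +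
      AffineMap.const ℝ Pt (F i j)
  | (i, j, false) =>
      (F (i + 1) j - F i j) • (xCoord.toAffineMap - AffineMap.const ℝ Pt (i : ℝ)) +
      (F (i + 1) (j + 1) - F (i + 1) j) • (yCoord.toAffineMap - AffineMap.const ℝ Pt (j : ℝ)) +
      AffineMap.const ℝ Pt (F i j)

variable {F : ℤ → ℤ → ℝ}

lemma interp_true_apply (i j : ℤ) (p : Pt) : interp F (i, j, true) p =
    (F (i + 1) (j + 1) - F i (j + 1)) * (xCoord p - i) +
      (F i (j + 1) - F i j) * (yCoord p - j) + F i j := by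
  simp [interp]

lemma interp_false_apply (i j : ℤ) (p : Pt) : interp F (i, j, false) p =
    (F (i + 1) j - F i j) * (xCoord p - i) +
      (F (i + 1) (j + 1) - F (i + 1) j) * (yCoord p - j) + F i j := by
  simp [interp]

/-- A linear form that is nonnegative on the upward side of `edge i j m` and vanishes on it. -/
def height (i j : ℤ) (p : Pt) : Fin 3 → ℝ
  | 0 => yCoord p - j - (xCoord p - i)
  | 1 => j + 1 - yCoord p
  | 2 => xCoord p - i

lemma interp_neighbour (i j : ℤ) (m : Fin 3) (p : Pt) :
    interp F (neighbour i j m) p = interp F (i, j, true) p + defect F i j m * height i j p m := by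
  fin_cases m <;>
    simp only [neighbour, defect, edgeDiff, height, interp_true_apply, interp_false_apply,
      sub_add_cancel, Int.cast_add, Int.cast_sub, Int.cast_one] <;>
    ring

lemma interp_eq_of_vertex_true {i j a b : ℤ} (hi : i ≤ a) (hj : b ≤ j + 1)
    (hij : a - b ≤ i - j) : interp F (i, j, true) (node a b) = F a b := by
  obtain ⟨rfl, rfl⟩ | ⟨rfl, rfl⟩ | ⟨rfl, rfl⟩ :
      (a = i ∧ b = j) ∨ (a = i ∧ b = j + 1) ∨ (a = i + 1 ∧ b = j + 1) := by omega
  all_goals simp [interp_true_apply]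

lemma interp_eq_of_vertex_false {i j a b : ℤ} (hi : a ≤ i + 1) (hj : j ≤ b)
    (hij : i - j ≤ a - b) : interp F (i, j, false) (node a b) = F a b := by
  obtain ⟨rfl, rfl⟩ | ⟨rfl, rfl⟩ | ⟨rfl, rfl⟩ :
      (a = i ∧ b = j) ∨ (a = i + 1 ∧ b = j) ∨ (a = i + 1 ∧ b = j + 1) := by omega
  all_goals simp [interp_false_apply]

variable {k : ℕ}

lemma RhombusConcave.interp_neighbour_le (hF : RhombusConcave k F) {i j : ℤ} {m : Fin 3} {p : Pt}
    (h_up : (i, j, true) ∈ cells k) (h_down : neighbour i j m ∈ cells k)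
    (hp : height i j p m ≤ 0) : interp F (neighbour i j m) p ≤ interp F (i, j, true) p := by
  rw [interp_neighbour]
  linarith [mul_nonpos_of_nonneg_of_nonpos (hF i j m h_up h_down) hp]

lemma RhombusConcave.le_interp_neighbour (hF : RhombusConcave k F) {i j : ℤ} {m : Fin 3} {p : Pt}
    (h_up : (i, j, true) ∈ cells k) (h_down : neighbour i j m ∈ cells k)
    (hp : 0 ≤ height i j p m) : interp F (i, j, true) p ≤ interp F (neighbour i j m) p := by
  rw [interp_neighbour]
  linarith [mul_nonneg (hF i j m h_up h_down) hp]

/-- The number of grid lines strictly between a little triangle and `node a b`; it decreases along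
a walk from the triangle to the point. -/
def separation (a b : ℤ) : Cell → ℕ
  | (i, j, u) =>
      let s := i - j - if u then 1 else 0
      (i - a).toNat + (a - (i + 1)).toNat + (j - b).toNat + (b - (j + 1)).toNat +
        (s - (a - b)).toNat + (a - b - (s + 1)).toNat

lemma RhombusConcave.exists_closer_true (hF : RhombusConcave k F) {i j a b : ℤ}
    (ht : (i, j, true) ∈ cells k) (hab : InHex k a b)
    (h_out : a < i ∨ j + 1 < b ∨ i - j < a - b) :
    ∃ t ∈ cells k, separation a b t < separation a b (i, j, true) ∧
      interp F t (node a b) ≤ interp F (i, j, true) (node a b) := by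
  obtain ⟨hi, hik, hj, hjk, -⟩ := mem_cells_true.1 ht
  obtain ⟨ha, -, -, hbk, hab, -⟩ := hab
  rcases h_out with h | h | h
  · have h_down : neighbour i j 2 ∈ cells k := mem_cells_false.2 (by omega)
    refine ⟨_, h_down, ?_, hF.interp_neighbour_le ht h_down ?_⟩
    · simp only [separation, neighbour, reduceIte, Bool.false_eq_true]; omega
    · simpa [height] using h.le
  · have h_down : neighbour i j 1 ∈ cells k := mem_cells_false.2 (by omega)
    refine ⟨_, h_down, ?_, hF.interp_neighbour_le ht h_down ?_⟩
    · simp only [separation, neighbour, reduceIte, Bool.false_eq_true]; omega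
    · simpa [height] using mod_cast h.le
  · have h_down : neighbour i j 0 ∈ cells k := mem_cells_false.2 (by omega)
    refine ⟨_, h_down, ?_, hF.interp_neighbour_le ht h_down ?_⟩
    · simp only [separation, neighbour, reduceIte, Bool.false_eq_true]; omega
    · have : b ≤ a - i + j := by omega
      simpa [height] using mod_cast this

lemma RhombusConcave.exists_closer_false (hF : RhombusConcave k F) {i j a b : ℤ}
    (ht : (i, j, false) ∈ cells k) (hab : InHex k a b)
    (h_out : i + 1 < a ∨ b < j ∨ a - b < i - j) :
    ∃ t ∈ cells k, separation a b t < separation a b (i, j, false) ∧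
      interp F t (node a b) ≤ interp F (i, j, false) (node a b) := by
  obtain ⟨hi, hik, hj, hjk, -⟩ := mem_cells_false.1 ht
  obtain ⟨-, hak, hb, -, -, hba⟩ := hab
  rcases h_out with h | h | h
  · have h_up : (i + 1, j, true) ∈ cells k := mem_cells_true.2 (by omega)
    have h_nb : neighbour (i + 1) j 2 = (i, j, false) := by simp [neighbour]
    refine ⟨_, h_up, ?_, h_nb ▸ hF.le_interp_neighbour h_up (h_nb ▸ ht) ?_⟩
    · simp only [separation, reduceIte, Bool.false_eq_true]; omega
    · simpa [height] using mod_cast h.le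
  · have h_up : (i, j - 1, true) ∈ cells k := mem_cells_true.2 (by omega)
    have h_nb : neighbour i (j - 1) 1 = (i, j, false) := by simp [neighbour]
    refine ⟨_, h_up, ?_, h_nb ▸ hF.le_interp_neighbour h_up (h_nb ▸ ht) ?_⟩
    · simp only [separation, reduceIte, Bool.false_eq_true]; omega
    · simpa [height] using h.le
  · have h_up : (i, j, true) ∈ cells k := mem_cells_true.2 (by omega)
    refine ⟨_, h_up, ?_, hF.le_interp_neighbour (m := 0) h_up ht ?_⟩
    · simp only [separation, reduceIte, Bool.false_eq_true]; omega
    · have : a ≤ b - j + i := by omega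
      simpa [height] using mod_cast this

lemma RhombusConcave.interp_eq_or_exists_closer (hF : RhombusConcave k F) {t : Cell}
    (ht : t ∈ cells k) {a b : ℤ} (hab : InHex k a b) :
    interp F t (node a b) = F a b ∨ ∃ t' ∈ cells k, separation a b t' < separation a b t ∧
      interp F t' (node a b) ≤ interp F t (node a b) := by
  obtain ⟨i, j, _ | _⟩ := t
  · by_cases h_out : i + 1 < a ∨ b < j ∨ a - b < i - j
    · exact .inr (hF.exists_closer_false ht hab h_out)
    · exact .inl (interp_eq_of_vertex_false (by omega) (by omega) (by omega))
  · by_cases h_out : a < i ∨ j + 1 < b ∨ i - j < a - b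
    · exact .inr (hF.exists_closer_true ht hab h_out)
    · exact .inl (interp_eq_of_vertex_true (by omega) (by omega) (by omega))

lemma RhombusConcave.le_interp_node (hF : RhombusConcave k F) {t : Cell} (ht : t ∈ cells k)
    {a b : ℤ} (hab : InHex k a b) : F a b ≤ interp F t (node a b) := by
  induction h_sep : separation a b t using Nat.strong_induction_on generalizing t with
  | _ n ih =>
    subst h_sep
    rcases hF.interp_eq_or_exists_closer ht hab with h | ⟨t', ht', h_lt, h_le⟩
    · exact h.ge
    · exact (ih _ h_lt ht' rfl).trans h_le

end Rhombus

section Extension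

lemma add_le_add_of_concaveOn_of_affineOn {g : Pt → ℝ} {D S : Set Pt} (hg : ConcaveOn ℝ D g)
    (h_aff : AffineOn g S) (hS : Convex ℝ S) {p q r s : Pt} (hp : p ∈ S) (hq : q ∈ S) (hr : r ∈ D)
    (hs : s ∈ D) (h_sum : r + s = p + q) : g r + g s ≤ g p + g q := by
  obtain ⟨φ, hφ⟩ := h_aff
  have h_mid : (1 / 2 : ℝ) • r + (1 / 2 : ℝ) • s = (1 / 2 : ℝ) • p + (1 / 2 : ℝ) • q := by
    rw [← smul_add, ← smul_add, h_sum]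
  have h_concave := hg.2 hr hs (by norm_num : (0 : ℝ) ≤ 1 / 2)
    (by norm_num : (0 : ℝ) ≤ 1 / 2) (by norm_num)
  rw [h_mid, hφ _ (hS hp hq (by norm_num) (by norm_num) (by norm_num)),
    Convex.combo_affine_apply (by norm_num), ← hφ p hp, ← hφ q hq] at h_concave
  simp only [smul_eq_mul] at h_concave
  linarith

variable {k : ℕ} [NeZero k]

lemma rhombusConcave_of_concaveOn {g : Pt → ℝ} (hg : ConcaveOn ℝ (grid k).region g)
    (h_aff : ∀ T ∈ (grid k).tris, AffineOn g T.region) :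
    RhombusConcave k fun a b => g (node a b) := by
  intro i j m h_up h_down
  rw [grid_region] at hg
  have h_rhombus {a b a' b' c d c' d' : ℤ} (hp : node a b ∈ (cellTri (i, j, true)).region)
      (hq : node a' b' ∈ (cellTri (i, j, true)).region) (hr : InHex k c d) (hs : InHex k c' d')
      (hx : c + c' = a + a') (hy : d + d' = b + b') :
      g (node c d) + g (node c' d') ≤ g (node a b) + g (node a' b') :=
    add_le_add_of_concaveOn_of_affineOn hg (h_aff _ (Finset.mem_image_of_mem _ h_up))
      (convex_region _) hp hq (node_mem_hexRegion.2 hr) (node_mem_hexRegion.2 hs)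
      (ext_coord (by simpa using mod_cast hx) (by simpa using mod_cast hy))
  obtain ⟨h₀, h₁, h₂⟩ := node_mem_cellTri_true_region i j
  rw [mem_cells_true] at h_up
  match m with
  | 0 =>
    rw [neighbour, mem_cells_false] at h_down
    have := h_rhombus h₀ h₁ (c := i + 1) (d := j) (c' := i) (d' := j + 1)
      (by unfold InHex; omega) (by unfold InHex; omega) (by ring) (by ring)
    simp only [defect, edgeDiff]
    linarith
  | 1 =>
    rw [neighbour, mem_cells_false] at h_down
    have := h_rhombus h₁ h₂ (c := i) (d := j) (c' := i + 1) (d' := j + 1 + 1)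
      (by unfold InHex; omega) (by unfold InHex; omega) (by ring) (by ring)
    simp only [defect, edgeDiff]
    linarith
  | 2 =>
    rw [neighbour, mem_cells_false] at h_down
    have := h_rhombus h₀ h₂ (c := i + 1) (d := j + 1) (c' := i - 1) (d' := j)
      (by unfold InHex; omega) (by unfold InHex; omega) (by ring) (by ring)
    simp only [defect, edgeDiff, sub_add_cancel]
    linarith

variable (k) in
/-- The concave extension to the plane of a function on lattice points: the lower envelope of its
interpolations on the little triangles of the grid. -/
def envelope (F : ℤ → ℤ → ℝ) (p : Pt) : ℝ :=
  (cells k).inf' (cells_nonempty k) fun t => interp F t p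

lemma concaveOn_envelope (F : ℤ → ℤ → ℝ) : ConcaveOn ℝ Set.univ (envelope k F) := by
  refine ⟨convex_univ, fun p _ q _ a b ha hb hab => Finset.le_inf' _ _ fun t ht => ?_⟩
  rw [Convex.combo_affine_apply hab]
  gcongr <;> exact Finset.inf'_le _ ht

variable {F : ℤ → ℤ → ℝ}

lemma RhombusConcave.envelope_eq_interp (hF : RhombusConcave k F) {t : Cell} (ht : t ∈ cells k)
    {p : Pt} (hp : p ∈ (cellTri t).region) : envelope k F p = interp F t p := by
  refine le_antisymm (Finset.inf'_le _ ht) (Finset.le_inf' _ _ fun t' ht' => ?_)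
  have h_convex : Convex ℝ {q | interp F t q ≤ interp F t' q} := by
    intro q hq r hr a b ha hb hab
    simp only [Set.mem_ofPred_eq, Convex.combo_affine_apply hab] at hq hr ⊢
    gcongr
  have h_node {a b : ℤ} (h_mem : node a b ∈ (cellTri t).region)
      (h_eq : interp F t (node a b) = F a b) :
      node a b ∈ {q | interp F t q ≤ interp F t' q} :=
    h_eq.trans_le (hF.le_interp_node ht' (node_mem_hexRegion.1 (cellTri_region_subset ht h_mem)))
  refine (cellTri_region_subset_iff h_convex t).2 ?_ hp
  obtain ⟨i, j, _ | _⟩ := t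
  · obtain ⟨h₀, h₁, h₂⟩ := node_mem_cellTri_false_region i j
    simp only [cellTri_v0, cellTri_v1, cellTri_false_v2]
    refine ⟨h_node h₀ ?_, h_node h₁ ?_, h_node h₂ ?_⟩ <;>
      exact interp_eq_of_vertex_false (by omega) (by omega) (by omega)
  · obtain ⟨h₀, h₁, h₂⟩ := node_mem_cellTri_true_region i j
    simp only [cellTri_v0, cellTri_v1, cellTri_true_v2]
    refine ⟨h_node h₀ ?_, h_node h₁ ?_, h_node h₂ ?_⟩ <;>
      exact interp_eq_of_vertex_true (by omega) (by omega) (by omega)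

lemma RhombusConcave.envelope_node (hF : RhombusConcave k F) {a b : ℤ} (hab : InHex k a b) :
    envelope k F (node a b) = F a b := by
  refine le_antisymm ?_ (Finset.le_inf' _ _ fun t ht => hF.le_interp_node ht hab)
  obtain ⟨t, ht, h_min⟩ := Finset.exists_min_image _ (separation a b) (cells_nonempty k)
  rcases hF.interp_eq_or_exists_closer ht hab with h_eq | ⟨t', ht', h_lt, -⟩
  · exact (Finset.inf'_le _ ht).trans h_eq.le
  · exact absurd h_lt (h_min t' ht').not_gt

end Extension

section Vertex

variable {k : ℕ}

/-- Every function on lattice points that vanishes on the perimeter and is affine across every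
inner edge across which `F` is affine vanishes on the hexagon. For concave `F` this expresses that
the rhombus inequalities tight at `F`, together with the boundary values, determine `F`. -/
def Rigid (k : ℕ) (F : ℤ → ℤ → ℝ) : Prop :=
  ∀ d : ℤ → ℤ → ℝ, (∀ a b, OnPerimeter k a b → d a b = 0) →
    (∀ i j m, (i, j, true) ∈ cells k → neighbour i j m ∈ cells k → defect F i j m = 0 →
      defect d i j m = 0) →
    ∀ a b, InHex k a b → d a b = 0

lemma edgeDiff_sub {A : Type*} [AddCommGroup A] (F G : ℤ → ℤ → A) (i j : ℤ) (m : Fin 3) :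
    edgeDiff (F - G) i j m = edgeDiff F i j m - edgeDiff G i j m := by
  fin_cases m <;> exact sub_sub_sub_comm ..

lemma defect_sub {A : Type*} [AddCommGroup A] (F G : ℤ → ℤ → A) (i j : ℤ) (m : Fin 3) :
    defect (F - G) i j m = defect F i j m - defect G i j m := by
  fin_cases m <;> simp only [defect, edgeDiff_sub] <;> exact sub_sub_sub_comm ..

lemma edge_increment (g : Pt → ℝ) (i j : ℤ) (m : Fin 3) :
    g (edge i j m).2 - g (edge i j m).1 = edgeDiff (fun a b => g (node a b)) i j m := by
  fin_cases m <;> rfl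

variable [NeZero k]

lemma edgeDiff_congr {F F' : ℤ → ℤ → ℝ} (h_eq : ∀ a b, InHex k a b → F a b = F' a b) {i j : ℤ}
    {m : Fin 3} (hm : edge i j m ∈ (grid k).edges) :
    edgeDiff F i j m = edgeDiff F' i j m := by
  match m with
  | 0 | 1 | 2 =>
    simp only [edge_mem_edges_iff, neighbour, mem_cells_true, mem_cells_false] at hm
    simp only [edgeDiff]
    congr 1 <;> exact h_eq _ _ (by unfold InHex; omega)

lemma defect_eq_average {F F₁ F₂ : ℤ → ℤ → ℝ}
    (h_avg : ∀ i j m, edge i j m ∈ (grid k).edges →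
      edgeDiff F i j m = (edgeDiff F₁ i j m + edgeDiff F₂ i j m) / 2)
    {i j : ℤ} {m : Fin 3} (h_up : (i, j, true) ∈ cells k) (h_down : neighbour i j m ∈ cells k) :
    defect F i j m = (defect F₁ i j m + defect F₂ i j m) / 2 := by
  have h_avg_up (n) := h_avg i j n (edge_mem_edges_iff.2 (.inl h_up))
  have h_avg_down {i' j' n} (h_nb : neighbour i' j' n = neighbour i j m) :=
    h_avg i' j' n (edge_mem_edges_iff.2 (.inr (h_nb ▸ h_down)))
  match m with
  | 0 =>
    simp only [defect, h_avg_up 2,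
      h_avg_down (i' := i + 1) (j' := j) (n := 2) (by simp [neighbour])]
    ring
  | 1 =>
    simp only [defect, h_avg_up 0, h_avg_down (i' := i) (j' := j + 1) (n := 0) rfl]
    ring
  | 2 =>
    simp only [defect, h_avg_up 1,
      h_avg_down (i' := i - 1) (j' := j - 1) (n := 1) (by simp [neighbour])]
    ring

lemma RhombusConcave.isConcaveCocirculation_envelope {F : ℤ → ℤ → ℝ} (hF : RhombusConcave k F) :
    IsConcaveCocirculation (grid k) fun e => envelope k F e.2 - envelope k F e.1 := by
  refine ⟨fun T _ => ?_, envelope k F, ?_, Finset.forall_mem_image.2 fun t ht => ?_, fun _ _ => rfl⟩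
  · simp only [GridTriangle.e0, GridTriangle.e1, GridTriangle.e2]
    ring
  · exact (concaveOn_envelope F).subset (Set.subset_univ _) (grid k).convex
  · exact ⟨interp F t, fun p => hF.envelope_eq_interp ht⟩

lemma RhombusConcave.envelope_edge {F : ℤ → ℤ → ℝ} (hF : RhombusConcave k F) {i j : ℤ} {m : Fin 3}
    (hm : edge i j m ∈ (grid k).edges) :
    envelope k F (edge i j m).2 - envelope k F (edge i j m).1 = edgeDiff F i j m := by
  rw [edge_increment, edgeDiff_congr (fun a b hab => hF.envelope_node hab) hm]

lemma exists_potential {h : Ed → ℝ} (hh : IsConcaveCocirculation (grid k) h) :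
    ∃ F : ℤ → ℤ → ℝ, RhombusConcave k F ∧ F 0 0 = 0 ∧
      ∀ i j m, edge i j m ∈ (grid k).edges → h (edge i j m) = edgeDiff F i j m := by
  obtain ⟨-, g, hg, h_aff, h_diff⟩ := hh
  refine ⟨fun a b => g (node a b) - g (node 0 0), fun i j m h_up h_down => ?_, sub_self _,
    fun i j m hm => ?_⟩
  · have := rhombusConcave_of_concaveOn hg h_aff i j m h_up h_down
    fin_cases m <;> simpa [defect, edgeDiff] using this
  · rw [h_diff _ hm, edge_increment]
    fin_cases m <;> simp [edgeDiff]

lemma eq_of_forall_succ_eq {α : Type*} {f : ℤ → α} {a n : ℤ}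
    (h_succ : ∀ i, a ≤ i → i < n → f (i + 1) = f i) (han : a ≤ n) : f n = f a := by
  induction n, han using Int.leInduction with
  | base => rfl
  | succ m ham ih =>
    rw [h_succ m ham (by omega), ih fun i hi him => h_succ i hi (by omega)]

lemma eq_zero_on_perimeter {A : Type*} [AddGroup A] {d : ℤ → ℤ → A} (h_zero : d 0 0 = 0)
    (h_bdry : ∀ i j m, edge i j m ∈ (grid k).boundary → edgeDiff d i j m = 0)
    {a b : ℤ} (hab : OnPerimeter k a b) : d a b = 0 := by
  have hk := NeZero.pos k
  simp only [edge_mem_boundary_iff, xor_iff_not_iff, neighbour] at h_bdry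
  have h_bottom (n : ℤ) (hn : 0 ≤ n) (hnk : n ≤ k) : d n 0 = 0 := by
    rw [eq_of_forall_succ_eq (f := fun n => d n 0) (fun i hi hin => ?_) hn, h_zero]
    have := h_bdry i (-1) 1 (by simp only [mem_cells_true, mem_cells_false]; omega)
    exact (sub_eq_zero.1 (by simpa [edgeDiff] using this)).symm
  have h_left (n : ℤ) (hn : 0 ≤ n) (hnk : n ≤ k) : d 0 n = 0 := by
    rw [eq_of_forall_succ_eq (f := fun n => d 0 n) (fun i hi hin => ?_) hn, h_zero]
    have := h_bdry 0 i 2 (by simp only [mem_cells_true, mem_cells_false]; omega)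
    exact (sub_eq_zero.1 (by simpa [edgeDiff] using this)).symm
  have h_right (n : ℤ) (hn : 1 ≤ n) (hnk : n ≤ k + 1) : d (k + 1) n = 0 := by
    rw [eq_of_forall_succ_eq (f := fun n => d (k + 1) n) (fun i hi hin => ?_) hn]
    · have := h_bdry k 0 0 (by simp only [mem_cells_true, mem_cells_false]; omega)
      simpa [edgeDiff, h_bottom k (by omega) le_rfl] using this
    · have := h_bdry (k + 1) i 2 (by simp only [mem_cells_true, mem_cells_false]; omega)
      exact (sub_eq_zero.1 (by simpa [edgeDiff] using this)).symm
  have h_top (n : ℤ) (hn : 1 ≤ n) (hnk : n ≤ k + 1) : d n (k + 1) = 0 := by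
    rw [eq_of_forall_succ_eq (f := fun n => d n (k + 1)) (fun i hi hin => ?_) hn]
    · have := h_bdry 0 k 0 (by simp only [mem_cells_true, mem_cells_false]; omega)
      simpa [edgeDiff, h_left k (by omega) le_rfl] using this
    · have := h_bdry i k 1 (by simp only [mem_cells_true, mem_cells_false]; omega)
      exact (sub_eq_zero.1 (by simpa [edgeDiff] using this)).symm
  obtain ⟨⟨ha, hak, hb, hbk, hab, hba⟩, rfl | rfl | rfl | rfl⟩ := hab
  exacts [h_left b hb (by omega), h_right b (by omega) hbk, h_bottom a ha (by omega),
    h_top a (by omega) hak]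

theorem isVertexOf_envelope {F : ℤ → ℤ → ℝ} (hF : RhombusConcave k F) (h_rigid : Rigid k F)
    {h₀ : Ed → ℝ} (h_bdry : ∀ e ∈ (grid k).boundary, envelope k F e.2 - envelope k F e.1 = h₀ e) :
    IsVertexOf (grid k) (CC (grid k) (grid k).boundary h₀)
      fun e => envelope k F e.2 - envelope k F e.1 := by
  refine ⟨⟨hF.isConcaveCocirculation_envelope, h_bdry⟩, ?_⟩
  rintro h₁ ⟨hh₁, hb₁⟩ h₂ ⟨hh₂, hb₂⟩ h_mid
  obtain ⟨F₁, hF₁, hz₁, hd₁⟩ := exists_potential hh₁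
  obtain ⟨F₂, hF₂, hz₂, hd₂⟩ := exists_potential hh₂
  have h_avg (i j m) (hm : edge i j m ∈ (grid k).edges) :
      edgeDiff F i j m = (edgeDiff F₁ i j m + edgeDiff F₂ i j m) / 2 := by
    rw [← hd₁ i j m hm, ← hd₂ i j m hm, ← h_mid _ hm]
    exact (hF.envelope_edge hm).symm
  have h_perimeter (a b) (hab : OnPerimeter k a b) : (F₁ - F₂) a b = 0 := by
    refine eq_zero_on_perimeter (by simp [hz₁, hz₂]) (fun i j m hm => ?_) hab
    have h_edge := Finset.mem_of_mem_filter _ hm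
    rw [edgeDiff_sub, ← hd₁ i j m h_edge, ← hd₂ i j m h_edge, hb₁ _ hm, hb₂ _ hm, sub_self]
  have h_tight (i j m) (h_up : (i, j, true) ∈ cells k) (h_down : neighbour i j m ∈ cells k)
      (hm : defect F i j m = 0) : defect (F₁ - F₂) i j m = 0 := by
    have h_defect := defect_eq_average h_avg h_up h_down
    have := hF₁ i j m h_up h_down
    have := hF₂ i j m h_up h_down
    rw [defect_sub]
    linarith
  have h_eq (a b) (hab : InHex k a b) : F₁ a b = F₂ a b :=
    sub_eq_zero.1 (h_rigid _ h_perimeter h_tight a b hab)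
  refine forall_mem_edges.2 fun i j m hm => ?_
  rw [hd₁ i j m hm, hd₂ i j m hm, edgeDiff_congr h_eq hm]

lemma exists_int_edgeDiff {F : ℤ → ℤ → ℝ} (h_int : ∀ a b, OnPerimeter k a b → ∃ z : ℤ, F a b = z)
    {i j : ℤ} {m : Fin 3} (hm : edge i j m ∈ (grid k).boundary) :
    ∃ z : ℤ, edgeDiff F i j m = z := by
  have h_sub {a b a' b' : ℤ} (h : OnPerimeter k a b) (h' : OnPerimeter k a' b') :
      ∃ z : ℤ, F a b - F a' b' = z := by
    obtain ⟨z, hz⟩ := h_int a b h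
    obtain ⟨z', hz'⟩ := h_int a' b' h'
    exact ⟨z - z', by rw [hz, hz', Int.cast_sub]⟩
  rw [edge_mem_boundary_iff, xor_iff_not_iff] at hm
  match m with
  | 0 | 1 | 2 =>
    simp only [neighbour, mem_cells_true, mem_cells_false] at hm
    exact h_sub (by unfold OnPerimeter InHex; omega) (by unfold OnPerimeter InHex; omega)

theorem exists_isVertexOf {F : ℤ → ℤ → ℝ} (hF : RhombusConcave k F) (h_rigid : Rigid k F)
    (h_int : ∀ a b, OnPerimeter k a b → ∃ z : ℤ, F a b = z) :
    ∃ (h₀ : Ed → ℤ) (h : Ed → ℝ),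
      IsVertexOf (grid k) (CC (grid k) (grid k).boundary fun e => (h₀ e : ℝ)) h ∧
      ∀ i j m, edge i j m ∈ (grid k).edges → h (edge i j m) = edgeDiff F i j m := by
  have h_floor : ∀ e ∈ (grid k).edges, e ∈ (grid k).boundary →
      envelope k F e.2 - envelope k F e.1 = (⌊envelope k F e.2 - envelope k F e.1⌋ : ℝ) := by
    refine forall_mem_edges.2 fun i j m hm hb => ?_
    obtain ⟨z, hz⟩ := exists_int_edgeDiff h_int hb
    rw [hF.envelope_edge hm, hz, Int.floor_intCast]
  exact ⟨fun e => ⌊envelope k F e.2 - envelope k F e.1⌋, _,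
    isVertexOf_envelope hF h_rigid fun e he => h_floor e (Finset.mem_of_mem_filter e he) he,
    fun i j m hm => hF.envelope_edge hm⟩

end Vertex

section Bands

variable {k : ℕ}

lemma eq_zero_of_forall_add_eq_two_mul {s : ℕ → ℝ} {n : ℕ} (h_first : s 0 = 0) (h_last : s n = 0)
    (h_arith : ∀ m, m + 2 ≤ n → s m + s (m + 2) = 2 * s (m + 1)) {m : ℕ} (hm : m ≤ n) :
    s m = 0 := by
  have h_linear (m : ℕ) (hm : m ≤ n) : s m = m * s 1 := by
    induction m using Nat.twoStepInduction with
    | zero => simp [h_first]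
    | one => simp
    | more m ih₀ ih₁ =>
      have := h_arith m hm
      rw [ih₀ (by omega), ih₁ (by omega)] at this
      push_cast at this ⊢
      linarith
  rcases n.eq_zero_or_pos with rfl | hn
  · rw [Nat.le_zero.1 hm, h_first]
  · have h_one : s 1 = 0 := by
      have := h_linear n le_rfl
      rw [h_last] at this
      exact (mul_eq_zero.1 this.symm).resolve_left (by positivity)
    rw [h_linear m hm, h_one, mul_zero]

lemma eq_zero_below_diagonal {A : Type*} [AddGroup A] {d : ℤ → ℤ → A}
    (h_right : ∀ b : ℤ, 1 ≤ b → b ≤ k + 1 → d (k + 1) b = 0)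
    (h_diag : ∀ a : ℤ, 1 ≤ a → a ≤ k + 1 → d a a = 0)
    (h_flat : ∀ a b : ℤ, 1 ≤ b → b < a → a ≤ k →
      d a b - d a (b + 1) = d (a + 1) (b + 1) - d (a + 1) (b + 2))
    {a b : ℤ} (hb : 1 ≤ b) (hba : b ≤ a) (ha : a ≤ k + 1) : d a b = 0 := by
  induction a, ha using Int.leInductionDown generalizing b with
  | base => exact h_right b hb hba
  | pred a ha ih =>
    induction b, hba using Int.leInductionDown with
    | base => exact h_diag _ hb (by omega)
    | pred b hba ihb =>
      have := h_flat (a - 1) (b - 1) hb (by omega) (by omega)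
      rw [sub_add_cancel, sub_add_cancel, ihb (by omega), ih (by omega) (by omega),
        show b - 1 + 2 = b + 1 by ring, ih (by omega) (by omega)] at this
      simpa using this

lemma eq_zero_on_diagonal {d : ℤ → ℤ → ℝ} (h_first : d 1 1 = 0) (h_last : d (k + 1) (k + 1) = 0)
    (h_below : ∀ a : ℤ, 1 ≤ a → a < k → defect d (a + 1) a 1 = 0)
    (h_above : ∀ a : ℤ, 1 ≤ a → a < k → defect d (a + 1) a 2 = 0)
    {a : ℤ} (ha : 1 ≤ a) (hak : a ≤ k + 1) : d a a = 0 := by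
  have h_arith (a : ℤ) (ha : 1 ≤ a) (hak : a < k) :
      d a a + d (a + 2) (a + 2) = 2 * d (a + 1) (a + 1) := by
    have h₁ := h_below a ha hak
    have h₂ := h_above a ha hak
    simp only [defect, edgeDiff, add_assoc, one_add_one_eq_two, add_sub_cancel_right,
      sub_add_cancel] at h₁ h₂
    linarith
  obtain ⟨m, rfl⟩ := Int.le.dest ha
  refine eq_zero_of_forall_add_eq_two_mul (s := fun m => d (1 + m) (1 + m)) (n := k)
    (by simpa using h_first) (by simpa [add_comm] using h_last) (fun m hm => ?_) (by omega)
  have := h_arith (1 + m) (by omega) (by omega)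
  simpa [add_assoc] using this

lemma eq_zero_of_defect_eq_zero {d : ℤ → ℤ → ℝ} (h_bdry : ∀ a b, OnPerimeter k a b → d a b = 0)
    (h_first : d 1 1 = 0) (h_below : ∀ i j : ℤ, 1 ≤ j → j < i → i ≤ k → defect d i j 1 = 0)
    (h_above : ∀ i j : ℤ, 1 < i → i ≤ k → i ≤ j + 1 → j ≤ k → defect d i j 2 = 0)
    {a b : ℤ} (hab : InHex k a b) : d a b = 0 := by
  have h_diag (a : ℤ) : 1 ≤ a → a ≤ k + 1 → d a a = 0 :=
    eq_zero_on_diagonal h_first (h_bdry _ _ (by unfold OnPerimeter InHex; omega))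
      (fun a ha hak => h_below _ _ ha (by omega) (by omega))
      (fun a ha hak => h_above _ _ (by omega) (by omega) le_rfl (by omega))
  have h_lower {a b : ℤ} : 1 ≤ b → b ≤ a → a ≤ k + 1 → d a b = 0 := by
    refine eq_zero_below_diagonal (fun b hb hbk => h_bdry _ _ ?_) h_diag fun a b hb hba ha => ?_
    · unfold OnPerimeter InHex; omega
    · have := h_below a b hb hba ha
      simp only [defect, edgeDiff, add_assoc, one_add_one_eq_two] at this
      linarith
  have h_upper {a b : ℤ} : 1 ≤ a → a ≤ b → b ≤ k + 1 → d a b = 0 := by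
    refine eq_zero_below_diagonal (d := fun a b => d b a) (fun a ha hak => h_bdry _ _ ?_) h_diag
      fun b a ha hab hb => ?_
    · unfold OnPerimeter InHex; omega
    · have := h_above (a + 1) b (by omega) (by omega) (by omega) hb
      simp only [defect, edgeDiff, add_assoc, one_add_one_eq_two, add_sub_cancel_right,
        sub_add_cancel] at this
      linarith
  by_cases h_per : OnPerimeter k a b
  · exact h_bdry a b h_per
  · simp only [OnPerimeter, hab, true_and] at h_per
    unfold InHex at hab
    rcases le_total a b with h | h
    · exact h_upper (by omega) h (by omega)
    · exact h_lower (by omega) h (by omega)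

lemma rigid_of_defect_eq_zero {F : ℤ → ℤ → ℝ} (hk : 0 < k) (h_corner : defect F 0 0 0 = 0)
    (h_below : ∀ i j : ℤ, 1 ≤ j → j < i → i ≤ k → defect F i j 1 = 0)
    (h_above : ∀ i j : ℤ, 1 < i → i ≤ k → i ≤ j + 1 → j ≤ k → defect F i j 2 = 0) : Rigid k F := by
  intro d h_bdry h_tight a b
  have h_first : d 1 1 = 0 := by
    have h := h_tight 0 0 0 (mem_cells_true.2 (by omega)) (mem_cells_false.2 (by omega)) h_corner
    have h₀ := h_bdry 0 0 (by unfold OnPerimeter InHex; omega)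
    have h₁ := h_bdry 0 1 (by unfold OnPerimeter InHex; omega)
    have h₂ := h_bdry 1 0 (by unfold OnPerimeter InHex; omega)
    simpa [defect, edgeDiff, h₀, h₁, h₂] using h
  exact eq_zero_of_defect_eq_zero h_bdry h_first
    (fun i j hj hji hi => h_tight i j 1 (mem_cells_true.2 (by omega))
      (mem_cells_false.2 (by omega)) (h_below i j hj hji hi))
    (fun i j hi hik hij hj => h_tight i j 2 (mem_cells_true.2 (by omega))
      (mem_cells_false.2 (by omega)) (h_above i j hi hik hij hj))

end Bands

section Potential

variable (k : ℕ)

/-- `k` times the piecewise linear part of the extremal potential: inside the hexagon it falls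
linearly from `k` at `node 1 1` to `0` on the two right-hand sides; on the two left-hand sides it
vanishes except for a dip at their common vertex. -/
def tent (a b : ℤ) : ℤ :=
  if a = 0 ∧ b = 0 then -2 * k else if a = 0 ∨ b = 0 then 0 else k + 1 - max a b

/-- The potential of the extremal cocirculation for `2 ≤ k`. The quadratic term has defect `1`
across edges of direction `ξ₁` and `0` across all others. This makes up for the failure of `tent k`
to be concave: it has defect at least `-k` across edges of direction `ξ₁`, with equality next to
`node 0 0`, and at least `0` across all others. -/
def potential (a b : ℤ) : ℝ := tent k a b / k - (a - b) * (a - b - 1) / 2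

variable {k}

lemma edgeDiff_potential (i j : ℤ) (m : Fin 3) : edgeDiff (potential k) i j m =
    (edgeDiff (tent k) i j m : ℤ) / k + (![0, i - j - 1, j + 1 - i] m : ℤ) := by
  match m with
  | 0 | 1 | 2 =>
    simp only [edgeDiff, potential, Matrix.cons_val]
    push_cast
    ring

lemma defect_potential (i j : ℤ) (m : Fin 3) : defect (potential k) i j m =
    (defect (tent k) i j m : ℤ) / k + if m = 0 then 1 else 0 := by
  match m with
  | 0 | 1 | 2 =>
    simp only [defect, edgeDiff_potential, Matrix.cons_val, reduceIte, Fin.reduceEq]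
    push_cast
    ring

lemma rhombusConcave_potential (hk : 0 < k) : RhombusConcave k (potential k) := by
  intro i j m h_up h_down
  have h_tent : 0 ≤ defect (tent k) i j m + if m = 0 then (k : ℤ) else 0 := by
    match m with
    | 0 | 1 | 2 =>
      simp only [neighbour, mem_cells_true, mem_cells_false] at h_up h_down
      simp only [defect, edgeDiff, tent, reduceIte, Fin.reduceEq]
      split_ifs <;> omega
  have h_div : defect (potential k) i j m =
      (defect (tent k) i j m + if m = 0 then (k : ℤ) else 0 : ℤ) / k := by
    rw [defect_potential]
    split_ifs <;> push_cast <;> field_simp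
    ring
  rw [h_div]
  positivity

lemma rigid_potential (hk : 0 < k) : Rigid k (potential k) := by
  have h_zero {i j : ℤ} {m : Fin 3} (hm : m ≠ 0) (h : defect (tent k) i j m = 0) :
      defect (potential k) i j m = 0 := by
    simp [defect_potential, h, hm]
  refine rigid_of_defect_eq_zero hk ?_ (fun i j hj hji hi => h_zero (by decide) ?_)
    fun i j hi hik hij hj => h_zero (by decide) ?_
  · have h_tent : defect (tent k) 0 0 0 = -k := calc
      defect (tent k) 0 0 0 = -2 * k - 0 - (0 - (k + 1 - 1)) := by simp [defect, edgeDiff, tent]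
      _ = -k := by ring
    simp [defect_potential, h_tent, hk.ne']
  all_goals
    simp only [defect, edgeDiff, tent]
    split_ifs <;> omega

lemma exists_int_eq_potential (hk : 0 < k) {a b : ℤ} (hab : OnPerimeter k a b) :
    ∃ z : ℤ, potential k a b = z := by
  obtain ⟨t, ht⟩ : (k : ℤ) ∣ tent k a b := by
    have h_val : tent k a b = 0 ∨ tent k a b = k * -2 := by
      unfold OnPerimeter InHex at hab
      unfold tent
      split_ifs <;> omega
    rcases h_val with h | h <;> simp [h]
  obtain ⟨q, hq⟩ := (Int.even_mul_pred_self (a - b)).two_dvd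
  refine ⟨t - q, ?_⟩
  have hq' : ((a : ℝ) - b) * (a - b - 1) = 2 * q := by exact_mod_cast hq
  rw [potential, ht, hq']
  push_cast
  field_simp

lemma edgeDiff_potential_one_one_zero : edgeDiff (potential k) 1 1 0 = -(1 / k) := by
  have h_tent : edgeDiff (tent k) 1 1 0 = -1 := calc
    edgeDiff (tent k) 1 1 0 = k + 1 - 2 - k := by simp [edgeDiff, tent]
    _ = -1 := by ring
  simp [edgeDiff_potential, h_tent, neg_div]

lemma abs_edgeDiff_potential_lt [NeZero k] (hk : 2 ≤ k) {i j : ℤ} {m : Fin 3}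
    (hm : edge i j m ∈ (grid k).edges) : |edgeDiff (potential k) i j m| < 2 * k := by
  obtain ⟨c, h_tent, h_quad⟩ : ∃ c : ℤ, |edgeDiff (tent k) i j m| ≤ c * k ∧
      |(![0, i - j - 1, j + 1 - i] m : ℤ)| < 2 * k - c := by
    -- Only the three edges at `node 0 0` need `c ≠ 1`.
    refine ⟨![if i = 0 ∧ j = 0 then 3 else 1, if i = 0 ∧ j = -1 then 2 else 1,
      if i = 0 ∧ j = 0 then 2 else 1] m, ?_⟩
    match m with
    | 0 | 1 | 2 =>
      simp only [edge_mem_edges_iff, neighbour, mem_cells_true, mem_cells_false] at hm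
      simp only [abs_le, abs_lt, edgeDiff, tent, Matrix.cons_val]
      split_ifs <;> omega
  have h_tent' : |((edgeDiff (tent k) i j m : ℤ) : ℝ) / k| ≤ c := by
    rw [abs_div, Nat.abs_cast, div_le_iff₀ (by positivity)]
    exact_mod_cast h_tent
  have h_quad' : |((![0, i - j - 1, j + 1 - i] m : ℤ) : ℝ)| < 2 * k - c := by
    exact_mod_cast h_quad
  rw [edgeDiff_potential]
  exact (abs_add_le _ _).trans_lt (by linarith)

end Potential

section Existence

variable {k : ℕ} [NeZero k]

theorem exists_rhombusConcave_rigid : ∃ F : ℤ → ℤ → ℝ, RhombusConcave k F ∧ Rigid k F ∧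
    (∀ a b, OnPerimeter k a b → ∃ z : ℤ, F a b = z) ∧
    (∃ i j m, edge i j m ∈ (grid k).edges ∧ edgeDiff F i j m = -(1 / k)) ∧
    ∀ i j m, edge i j m ∈ (grid k).edges → |edgeDiff F i j m| < 2 * k := by
  have hk := NeZero.pos k
  rcases (Nat.succ_le_of_lt hk).eq_or_lt with rfl | hk₂
  · have h_flat (i j m) : defect (fun a _ => -(a : ℝ)) i j m = 0 := by
      fin_cases m <;> simp [defect, edgeDiff]
    refine ⟨fun a _ => -(a : ℝ), fun i j m _ _ => (h_flat i j m).ge,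
      rigid_of_defect_eq_zero hk (h_flat 0 0 0) (fun i j _ _ _ => h_flat i j 1)
        (fun i j _ _ _ _ => h_flat i j 2), fun a _ _ => ⟨-a, by simp⟩,
      ⟨0, 0, 0, by simp [edge_mem_edges_iff], by simp [edgeDiff]⟩, fun i j m _ => ?_⟩
    fin_cases m <;> simp [edgeDiff]
  · exact ⟨potential k, rhombusConcave_potential hk, rigid_potential hk,
      fun a b => exists_int_eq_potential hk,
      ⟨1, 1, 0, edge_mem_edges_iff.2 (.inl (mem_cells_true.2 (by omega))),
        edgeDiff_potential_one_one_zero⟩,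
      fun i j m => abs_edgeDiff_potential_lt hk₂⟩

end Existence

end HexGrid

/-- For every k ≥ 1 there are a convex grid G whose region is the
hexagon with two opposite (horizontal) sides of length 1 and the other four sides of
length k, and an integer h₀ on the boundary edges of G such that C(G,h₀) has a vertex
h with h(e) = −1/k on some edge and |h(e')| < 2k on every edge. -/
theorem stmt14 (k : ℕ) (hk : 0 < k) :
    ∃ (G : ConvexGrid) (p : Pt) (h₀ : Ed → ℤ) (h : Ed → ℝ),
      G.region = convexHull ℝ
        ({p, p + xiv 0,
          p + xiv 0 - (k : ℝ) • xiv 2,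
          p + xiv 0 - (k : ℝ) • xiv 2 + (k : ℝ) • xiv 1,
          p - (k : ℝ) • xiv 2 + (k : ℝ) • xiv 1,
          p + (k : ℝ) • xiv 1} : Set Pt) ∧
      IsVertexOf G (CC G (↑G.boundary) fun e => (h₀ e : ℝ)) h ∧
      (∃ e ∈ G.edges, h e = -(1 / (k : ℝ))) ∧
      ∀ e ∈ G.edges, |h e| < 2 * (k : ℝ) := by
  have : NeZero k := ⟨hk.ne'⟩
  obtain ⟨F, h_concave, h_rigid, h_int, ⟨i, j, m, hm, h_value⟩, h_bound⟩ :=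
    HexGrid.exists_rhombusConcave_rigid (k := k)
  obtain ⟨h₀, h, h_vertex, h_edge⟩ := HexGrid.exists_isVertexOf h_concave h_rigid h_int
  refine ⟨HexGrid.grid k, HexGrid.node k 0, h₀, h, ?_, h_vertex,
    ⟨_, hm, (h_edge i j m hm).trans h_value⟩,
    HexGrid.forall_mem_edges.2 fun i j m hm => h_edge i j m hm ▸ h_bound i j m hm⟩
  rw [HexGrid.grid_region, HexGrid.hexRegion_eq_convexHull]
  congr! <;> apply HexGrid.ext_coord <;> simp [add_comm]

end
end
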